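/- Let n ≥ 1, γ > −min(2,n), α > 1 with α ≥ max(1, 1+γ/n), γ/(α−1) ≤ s ≤ n, α ≤ q ≤ ∞, 0 < r ≤ ∞, and assume s/n + 1/q > 0 or (s/n + 1/q = 0 and r = ∞), and s/n + 1/q < 1 or (s/n + 1/q = 1 and r ≤ 1). Assume the double subcritical condition s/n + 1/q < min(1/q_c, 1/Q_c). Let T > 0, let u₀ be measurable, and let u₁, u₂ be two mild solutions of the Hardy–Hénon equation on (0,T) with the same initial data u₀ such that ess sup_{t∈(0,T)} ‖u_i(t)‖_{K̇^s_{q,r}} < ∞ for i = 1,2. Then u₁(t,x) = u₂(t,x) for almost every (t,x) ∈ (0,T)×ℝⁿ. -/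

import Mathlib

open MeasureTheory Set ENNReal Filter

noncomputable section

abbrev Euc (n : ℕ) : Type := EuclideanSpace ℝ (Fin n)

def annulus (n : ℕ) (j : ℤ) : Set (Euc n) :=
  {x : Euc n | (2 : ℝ) ^ (j - 1) ≤ ‖x‖ ∧ ‖x‖ < (2 : ℝ) ^ j}

def herzNorm (n : ℕ) (s : ℝ) (q r : ℝ≥0∞) (f : Euc n → ℝ) : ℝ≥0∞ :=
  if r = ⊤ then
    ⨆ j : ℤ, ENNReal.ofReal ((2 : ℝ) ^ ((j : ℝ) * s)) *
      eLpNorm ((annulus n j).indicator f) q volume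
  else
    (∑' j : ℤ, (ENNReal.ofReal ((2 : ℝ) ^ ((j : ℝ) * s)) *
      eLpNorm ((annulus n j).indicator f) q volume) ^ r.toReal) ^ (1 / r.toReal)

def heatKernel (n : ℕ) (t : ℝ) (x y : Euc n) : ℝ :=
  (4 * Real.pi * t) ^ (-(n : ℝ) / 2) * Real.exp (-‖x - y‖ ^ 2 / (4 * t))

def heatSemigroup (n : ℕ) (t : ℝ) (f : Euc n → ℝ) (x : Euc n) : ℝ :=
  ∫ y, heatKernel n t x y * f y

def nonlin (n : ℕ) (γ α : ℝ) (v : Euc n → ℝ) (x : Euc n) : ℝ :=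
  ‖x‖ ^ γ * |v x| ^ (α - 1) * v x

/-- `u` is a mild solution of the Hardy–Hénon equation
`∂ₜu - Δu = |x|^γ |u|^{α-1} u` on `(0,T) × ℝⁿ` with initial data `u₀`:
`u` is measurable, and for a.e. `(t,x) ∈ (0,T) × ℝⁿ` the relevant integrals
converge absolutely and the Duhamel formula holds. -/
def IsMildSolution (n : ℕ) (γ α T : ℝ) (u₀ : Euc n → ℝ) (u : ℝ → Euc n → ℝ) : Prop :=
  Measurable (Function.uncurry u) ∧
  ∀ᵐ p : ℝ × Euc n ∂((volume.restrict (Set.Ioo (0 : ℝ) T)).prod volume),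
    (Integrable (fun y => heatKernel n p.1 p.2 y * u₀ y) volume) ∧
    (Integrable (fun z : ℝ × Euc n =>
        heatKernel n (p.1 - z.1) p.2 z.2 * nonlin n γ α (u z.1) z.2)
      ((volume.restrict (Set.Ioo (0 : ℝ) p.1)).prod volume)) ∧
    u p.1 p.2 = heatSemigroup n p.1 u₀ p.2 +
      ∫ z : ℝ × Euc n, heatKernel n (p.1 - z.1) p.2 z.2 * nonlin n γ α (u z.1) z.2
        ∂((volume.restrict (Set.Ioo (0 : ℝ) p.1)).prod volume)

theorem minkowski_bound {X Y : Type*} [MeasurableSpace X] [MeasurableSpace Y]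
    (μ : Measure X) [SFinite μ] (ν : Measure Y) [SFinite ν] (q : ℝ≥0∞) (hq : 1 ≤ q)
    (F : Y → X → ℝ≥0∞) (hF : Measurable (Function.uncurry F))
    (c : Y → ℝ≥0∞) (hc : Measurable c) (hc0 : ∀ᵐ y ∂ν, c y ≠ 0) (hct : ∀ᵐ y ∂ν, c y ≠ ⊤)
    (hb : ∀ᵐ y ∂ν, eLpNorm (F y) q μ ≤ c y) :
    eLpNorm (fun x => ∫⁻ y, F y x ∂ν) q μ ≤ ∫⁻ y, c y ∂ν := by
  rcases eq_or_ne q ⊤ with rfl | hqt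
  · rw [eLpNorm_exponent_top]
    refine eLpNormEssSup_le_of_ae_enorm_bound ?_
    have h1 : ∀ᵐ y ∂ν, ∀ᵐ x ∂μ, F y x ≤ c y := by
      filter_upwards [hb] with y hy
      rw [eLpNorm_exponent_top] at hy
      filter_upwards [enorm_ae_le_eLpNormEssSup (F y) μ] with x hx
      exact (by simpa using hx : F y x ≤ _).trans hy
    have hm : MeasurableSet {z : Y × X | F z.1 z.2 ≤ c z.1} :=
      measurableSet_le hF (hc.comp measurable_fst)
    rw [Measure.ae_ae_comm hm] at h1
    filter_upwards [h1] with x hx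
    simpa using lintegral_mono_ae hx
  · have hq0 : q ≠ 0 := by rintro rfl; simp at hq
    have hQ1 : 1 ≤ q.toReal := by
      rw [← ENNReal.toReal_one]; exact (ENNReal.toReal_le_toReal (by simp) hqt).2 hq
    have hQ0 : 0 < q.toReal := by linarith
    rw [eLpNorm_eq_lintegral_rpow_enorm_toReal hq0 hqt]
    simp only [enorm_eq_self]
    set Q := q.toReal with hQ
    have hpt : ∀ x, (∫⁻ y, F y x ∂ν) ^ Q ≤
        (∫⁻ y, c y ∂ν) ^ (Q - 1) * ∫⁻ y, c y ^ (1 - Q) * F y x ^ Q ∂ν := by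
      intro x
      have hFx : Measurable fun y => F y x := hF.comp (measurable_id.prodMk measurable_const)
      rcases eq_or_lt_of_le hQ1 with h1 | h1
      · rw [← h1]; simp
      have hconj : Q.HolderConjugate (Q / (Q - 1)) := Real.HolderConjugate.conjExponent h1
      have := ENNReal.lintegral_mul_le_Lp_mul_Lq ν hconj
        (f := fun y => c y ^ ((1 - Q) / Q) * F y x) (g := fun y => c y ^ ((Q - 1) / Q))
        (by fun_prop) (by fun_prop)
      have e1 : ∫⁻ y, F y x ∂ν = ∫⁻ (a : Y), ((fun y => c y ^ ((1 - Q) / Q) * F y x) * fun y => c y ^ ((Q - 1) / Q)) a ∂ν := by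
        refine lintegral_congr_ae ?_
        filter_upwards [hc0, hct] with y h0 ht
        simp only [Pi.mul_apply]
        rw [mul_right_comm, ← ENNReal.rpow_add _ _ h0 ht]
        rw [show (1 - Q) / Q + (Q - 1) / Q = 0 by ring]; simp
      rw [← e1] at this
      calc (∫⁻ y, F y x ∂ν) ^ Q ≤ _ := ENNReal.rpow_le_rpow this hQ0.le
        _ = _ := by
          rw [ENNReal.mul_rpow_of_nonneg _ _ hQ0.le, ← ENNReal.rpow_mul, ← ENNReal.rpow_mul]
          rw [one_div_mul_cancel hQ0.ne', ENNReal.rpow_one, mul_comm]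
          congr 1
          · congr 1
            · refine lintegral_congr fun y => ?_
              rw [← ENNReal.rpow_mul]
              have : (Q - 1) / Q * (Q / (Q - 1)) = 1 := by
                have : Q - 1 ≠ 0 := by linarith
                field_simp
              rw [this, ENNReal.rpow_one]
            · have : Q - 1 ≠ 0 := by linarith
              field_simp
          · refine lintegral_congr fun y => ?_
            rw [ENNReal.mul_rpow_of_nonneg _ _ hQ0.le, ← ENNReal.rpow_mul]
            congr 2; field_simp
    have hmain : ∫⁻ x, (∫⁻ y, F y x ∂ν) ^ Q ∂μ ≤ (∫⁻ y, c y ∂ν) ^ Q := by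
      have hFs : Measurable fun z : X × Y => F z.2 z.1 := hF.comp (by fun_prop : Measurable fun z : X × Y => (z.2, z.1))
      have hFq : Measurable fun z : X × Y => c z.2 ^ (1 - Q) * F z.2 z.1 ^ Q := by fun_prop
      calc ∫⁻ x, (∫⁻ y, F y x ∂ν) ^ Q ∂μ
          ≤ ∫⁻ x, (∫⁻ y, c y ∂ν) ^ (Q - 1) * ∫⁻ y, c y ^ (1 - Q) * F y x ^ Q ∂ν ∂μ :=
            lintegral_mono hpt
        _ = (∫⁻ y, c y ∂ν) ^ (Q - 1) * ∫⁻ x, ∫⁻ y, c y ^ (1 - Q) * F y x ^ Q ∂ν ∂μ := by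
            rw [lintegral_const_mul]
            exact hFq.lintegral_prod_right'
        _ = (∫⁻ y, c y ∂ν) ^ (Q - 1) * ∫⁻ y, ∫⁻ x, c y ^ (1 - Q) * F y x ^ Q ∂μ ∂ν := by
            rw [lintegral_lintegral_swap]
            exact hFq.aemeasurable
        _ ≤ (∫⁻ y, c y ∂ν) ^ (Q - 1) * ∫⁻ y, c y ∂ν := by
            gcongr 1
            refine lintegral_mono_ae ?_
            filter_upwards [hc0, hct, hb] with y h0 ht hy
            rw [lintegral_const_mul _ (by fun_prop)]
            rw [eLpNorm_eq_lintegral_rpow_enorm_toReal hq0 hqt] at hy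
            simp only [enorm_eq_self] at hy
            have hy2 := ENNReal.rpow_le_rpow hy hQ0.le
            rw [← ENNReal.rpow_mul, ← hQ, one_div_mul_cancel hQ0.ne', ENNReal.rpow_one] at hy2
            calc _ ≤ c y ^ (1 - Q) * c y ^ Q := by gcongr
              _ = c y := by rw [← ENNReal.rpow_add _ _ h0 ht]; simp
        _ = (∫⁻ y, c y ∂ν) ^ Q := by
            rcases eq_or_ne (∫⁻ y, c y ∂ν) 0 with h0 | h0
            · rw [h0, mul_zero, ENNReal.zero_rpow_of_pos hQ0]
            rcases eq_or_ne (∫⁻ y, c y ∂ν) ⊤ with ht | ht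
            · rw [ht, ENNReal.top_rpow_of_pos hQ0, ENNReal.mul_top]
              rcases eq_or_lt_of_le hQ1 with h1 | h1
              · rw [← h1]; simp
              · rw [ENNReal.top_rpow_of_pos (by linarith)]; simp
            · nth_rewrite 2 [← ENNReal.rpow_one (∫⁻ y, c y ∂ν)]
              rw [← ENNReal.rpow_add _ _ h0 ht]; simp
    calc _ ≤ ((∫⁻ y, c y ∂ν) ^ Q) ^ (1 / Q) := ENNReal.rpow_le_rpow hmain (by positivity)
      _ = _ := by rw [← ENNReal.rpow_mul, mul_one_div_cancel hQ0.ne', ENNReal.rpow_one]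

theorem heatKernel_nonneg' (n : ℕ) {t : ℝ} (ht : 0 < t) (x y : Euc n) : 0 ≤ heatKernel n t x y := by
  unfold heatKernel; positivity

theorem heatKernel_symm' (n : ℕ) (t : ℝ) (x y : Euc n) : heatKernel n t x y = heatKernel n t y x := by
  unfold heatKernel; rw [norm_sub_rev]

theorem heatKernel_measurable (n : ℕ) :
    Measurable (fun z : ℝ × Euc n × Euc n => heatKernel n z.1 z.2.1 z.2.2) := by
  unfold heatKernel; fun_prop

/-- kernel in ENNReal -/
def gE (n : ℕ) (t : ℝ) (x y : Euc n) : ℝ≥0∞ := ENNReal.ofReal (heatKernel n t x y)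

theorem gE_measurable (n : ℕ) :
    Measurable (fun z : ℝ × Euc n × Euc n => gE n z.1 z.2.1 z.2.2) :=
  (heatKernel_measurable n).ennreal_ofReal

@[fun_prop]
theorem gE_comp {X : Type*} [MeasurableSpace X] (n : ℕ) {f : X → ℝ} {g h : X → Euc n}
    (hf : Measurable f) (hg : Measurable g) (hh : Measurable h) :
    Measurable (fun z => gE n (f z) (g z) (h z)) :=
  (gE_measurable n).comp (hf.prodMk (hg.prodMk hh))

theorem lintegral_gE (n : ℕ) {t : ℝ} (ht : 0 < t) (x : Euc n) : ∫⁻ y, gE n t x y = 1 := by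
  have h1 : ∫⁻ y, gE n t x y = ∫⁻ z : Euc n, ENNReal.ofReal ((4 * Real.pi * t) ^ (-(n : ℝ) / 2) * Real.exp (-(1 / (4 * t)) * ‖z‖ ^ 2)) := by
    rw [← lintegral_sub_left_eq_self (μ := (volume : Measure (Euc n))) _ x]
    refine lintegral_congr fun y => ?_
    unfold gE heatKernel
    have e : ‖x - (x - y)‖ = ‖y‖ := congrArg norm (sub_sub_cancel x y)
    erw [e]
    congr 3; ring
  have hI := GaussianFourier.integral_rexp_neg_mul_sq_norm (V := Euc n) (b := 1 / (4 * t)) (by positivity)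
  have hInt : Integrable (fun z : Euc n => Real.exp (-(1 / (4 * t)) * ‖z‖ ^ 2)) := by
    by_contra hcon
    rw [integral_undef hcon] at hI
    have : (0 : ℝ) < (Real.pi / (1 / (4 * t))) ^ ((Module.finrank ℝ (Euc n) : ℝ) / 2) := by positivity
    linarith
  rw [h1, ← ofReal_integral_eq_lintegral_ofReal (hInt.const_mul _)
    (Eventually.of_forall fun z => by positivity), integral_const_mul, hI]
  rw [finrank_euclideanSpace_fin, show Real.pi / (1 / (4 * t)) = 4 * Real.pi * t by field_simp,
    ← Real.rpow_add (by positivity)]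
  simp [show -(n : ℝ) / 2 + n / 2 = 0 by ring]

theorem lintegral_gE' (n : ℕ) {t : ℝ} (ht : 0 < t) (y : Euc n) : ∫⁻ x, gE n t x y = 1 := by
  rw [← lintegral_gE n ht y]
  exact lintegral_congr fun x => by unfold gE; rw [heatKernel_symm']

theorem rpow_mul_exp_bound (N : ℝ) (hN : 0 ≤ N) :
    ∃ C : ℝ, 0 < C ∧ ∀ z : ℝ, 0 < z → Real.exp (-z ^ 2 / 4) ≤ C * z ^ (-N) := by
  rcases hN.eq_or_lt with rfl | hN
  · refine ⟨1, one_pos, fun z hz => ?_⟩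
    simp only [neg_zero, Real.rpow_zero, mul_one, Real.exp_le_one_iff]
    nlinarith [sq_nonneg z]
  · refine ⟨(2 * N) ^ (N / 2), by positivity, fun z hz => ?_⟩
    have h1 : z ^ 2 / (2 * N) ≤ Real.exp (z ^ 2 / (2 * N)) := by
      have := Real.add_one_le_exp (z ^ 2 / (2 * N)); linarith
    have h2 := Real.rpow_le_rpow (by positivity) h1 (show 0 ≤ N / 2 by positivity)
    rw [← Real.exp_mul, Real.div_rpow (by positivity) (by positivity), ← Real.rpow_natCast, ← Real.rpow_mul hz.le] at h2
    have e1 : ((2 : ℕ) : ℝ) * (N / 2) = N := by push_cast; ring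
    have e2 : z ^ ((2 : ℕ) : ℝ) / (2 * N) * (N / 2) = z ^ 2 / 4 := by
      rw [Real.rpow_natCast]; field_simp; ring
    rw [e1, e2, div_le_iff₀ (by positivity)] at h2
    rw [show -z ^ 2 / 4 = -(z ^ 2 / 4) by ring, Real.exp_neg, Real.rpow_neg hz.le,
      ← div_eq_mul_inv, le_div_iff₀ (by positivity), inv_mul_le_iff₀ (by positivity)]
    exact h2

theorem heatKernel_far (n : ℕ) (N : ℝ) (hN : 0 ≤ N) :
    ∃ C : ℝ, 0 < C ∧ ∀ (t : ℝ) (x y : Euc n) (ρ : ℝ), 0 < t → 0 < ρ → ρ ≤ ‖x - y‖ →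
      heatKernel n t x y ≤ C * t ^ (-(n : ℝ) / 2) * (ρ / √t) ^ (-N) := by
  obtain ⟨C, hC, h⟩ := rpow_mul_exp_bound N hN
  refine ⟨(4 * Real.pi) ^ (-(n : ℝ) / 2) * C, by positivity, fun t x y ρ ht hρ hxy => ?_⟩
  unfold heatKernel
  rw [Real.mul_rpow (by positivity) ht.le]
  have h1 : Real.exp (-‖x - y‖ ^ 2 / (4 * t)) ≤ Real.exp (-(ρ / √t) ^ 2 / 4) := by
    rw [Real.exp_le_exp, div_pow, Real.sq_sqrt ht.le]
    rw [show -(ρ ^ 2 / t) / 4 = - ρ ^ 2 / (4 * t) by field_simp]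
    gcongr
  have h2 := h (ρ / √t) (by positivity)
  calc _ ≤ (4 * Real.pi) ^ (-(n : ℝ) / 2) * t ^ (-(n : ℝ) / 2) * (C * (ρ / √t) ^ (-N)) := by
        gcongr; exact h1.trans h2
    _ = _ := by ring

theorem heatKernel_le (n : ℕ) (t : ℝ) (x y : Euc n) (ht : 0 < t) :
      heatKernel n t x y ≤ t ^ (-(n : ℝ) / 2) := by
  unfold heatKernel
  have h1 : Real.exp (-‖x - y‖ ^ 2 / (4 * t)) ≤ 1 := by
    rw [Real.exp_le_one_iff]
    apply div_nonpos_of_nonpos_of_nonneg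
    · have := sq_nonneg ‖x - y‖; linarith
    · positivity
  have h2 : (4 * Real.pi * t) ^ (-(n : ℝ) / 2) ≤ t ^ (-(n : ℝ) / 2) := by
    apply Real.rpow_le_rpow_of_nonpos ht
    · have := Real.pi_gt_three; nlinarith
    · have : (0 : ℝ) ≤ n := by positivity
      linarith
  calc _ ≤ t ^ (-(n : ℝ) / 2) * 1 := by gcongr
    _ = _ := mul_one _

theorem annulus_measurable (n : ℕ) (k : ℤ) : MeasurableSet (annulus n k) :=
  (measurableSet_le measurable_const measurable_norm).inter
    (measurableSet_lt measurable_norm measurable_const)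

theorem annulus_volume (n : ℕ) (hn : 1 ≤ n) :
    ∃ C : ℝ, 1 ≤ C ∧ ∀ k : ℤ, volume (annulus n k) ≤ ENNReal.ofReal (C * ((2 : ℝ) ^ (k : ℝ)) ^ (n : ℝ)) := by
  have : Nontrivial (Euc n) := by
    have : Nonempty (Fin n) := ⟨⟨0, by omega⟩⟩
    infer_instance
  have hfin : volume (Metric.ball (0 : Euc n) 1) ≠ ⊤ := measure_ball_lt_top.ne
  refine ⟨max 1 (volume (Metric.ball (0 : Euc n) 1)).toReal, le_max_left _ _, fun k => ?_⟩
  calc volume (annulus n k) ≤ volume (Metric.ball (0 : Euc n) ((2 : ℝ) ^ k)) := by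
        apply measure_mono; intro x hx; simpa using hx.2
    _ = ENNReal.ofReal (((2 : ℝ) ^ k) ^ n) * volume (Metric.ball (0 : Euc n) 1) := by
        rw [Measure.addHaar_ball _ _ (by positivity), finrank_euclideanSpace_fin]
    _ = ENNReal.ofReal (((2 : ℝ) ^ k) ^ n) * ENNReal.ofReal (volume (Metric.ball (0 : Euc n) 1)).toReal := by
        rw [ENNReal.ofReal_toReal hfin]
    _ ≤ _ := by
        rw [← ENNReal.ofReal_mul (by positivity), Real.rpow_natCast, Real.rpow_intCast, mul_comm]
        apply ENNReal.ofReal_le_ofReal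
        gcongr
        exact le_max_right _ _

theorem annulus_disjoint (n : ℕ) : Pairwise (Function.onFun Disjoint (annulus n)) := by
  have key : ∀ i j : ℤ, i < j → Disjoint (annulus n i) (annulus n j) := by
    intro i j hij
    rw [Set.disjoint_left]
    intro x hx hy
    have : (2 : ℝ) ^ i ≤ 2 ^ (j - 1) := zpow_le_zpow_right₀ (by norm_num) (by omega)
    exact absurd hx.2 (not_lt.2 (this.trans hy.1))
  intro i j hij
  rcases lt_or_gt_of_ne hij with h | h
  · exact key i j h
  · exact (key j i h).symm

theorem annulus_iUnion (n : ℕ) : (⋃ k, annulus n k) = {0}ᶜ := by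
  ext x
  simp only [mem_iUnion, mem_compl_iff, mem_singleton_iff]
  constructor
  · rintro ⟨k, hk⟩ rfl
    have := hk.1
    simp at this
    have h2 : (0 : ℝ) < 2 ^ (k - 1) := by positivity
    linarith
  · intro hx
    obtain ⟨k, hk⟩ := exists_mem_Ico_zpow (x := ‖x‖) (y := 2) (by simpa using hx) (by norm_num)
    exact ⟨k + 1, by simpa [annulus] using hk⟩

theorem iUnion_annulus_ae (n : ℕ) (hn : 1 ≤ n) :
    (volume : Measure (Euc n)).restrict (⋃ k, annulus n k) = volume := by
  have : Nontrivial (Euc n) := by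
    have : Nonempty (Fin n) := ⟨⟨0, by omega⟩⟩
    infer_instance
  rw [annulus_iUnion]
  exact restrict_compl_singleton 0

theorem lintegral_annuli (n : ℕ) (hn : 1 ≤ n) (f : Euc n → ℝ≥0∞) :
    ∫⁻ y, f y = ∑' k, ∫⁻ y in annulus n k, f y := by
  rw [← lintegral_iUnion (annulus_measurable n) (annulus_disjoint n), iUnion_annulus_ae n hn]

theorem far_dist (n : ℕ) (j k : ℤ) (hjk : 2 ≤ |k - j|) (x y : Euc n) (hx : x ∈ annulus n j)
    (hy : y ∈ annulus n k) : max ((2 : ℝ) ^ (j : ℝ)) ((2 : ℝ) ^ (k : ℝ)) / 4 ≤ ‖x - y‖ := by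
  have key : ∀ (j k : ℤ) (x y : Euc n), j + 2 ≤ k → x ∈ annulus n j → y ∈ annulus n k →
      max ((2 : ℝ) ^ (j : ℝ)) ((2 : ℝ) ^ (k : ℝ)) / 4 ≤ ‖x - y‖ := by
    intro j k x y h hx hy
    rw [Real.rpow_intCast, Real.rpow_intCast]
    have h1 : (2 : ℝ) ^ j ≤ 2 ^ (k - 2) := zpow_le_zpow_right₀ (by norm_num) (by omega)
    have h2 : (2 : ℝ) ^ (k - 2) = 2 ^ k / 4 := by rw [zpow_sub₀ (by norm_num)]; norm_num
    have h3 : (2 : ℝ) ^ (k - 1) = 2 ^ k / 2 := by rw [zpow_sub₀ (by norm_num)]; norm_num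
    have h4 : (0 : ℝ) < 2 ^ k := by positivity
    rw [max_eq_right (by linarith)]
    have := hx.2; have := hy.1
    have := norm_sub_norm_le y x
    rw [norm_sub_rev] at this
    linarith
  rcases le_abs.1 hjk with h | h
  · exact key j k x y (by omega) hx hy
  · rw [max_comm, norm_sub_rev]; exact key k j y x (by omega) hy hx

theorem jensen_gE (n : ℕ) {t : ℝ} (ht : 0 < t) (x : Euc n) (f : Euc n → ℝ≥0∞) (hf : Measurable f)
    (P : ℝ) (hP : 1 ≤ P) : (∫⁻ y, gE n t x y * f y) ^ P ≤ ∫⁻ y, gE n t x y * f y ^ P := by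
  have hg : Measurable (gE n t x) := gE_comp n measurable_const measurable_const measurable_id
  set ν := (volume : Measure (Euc n)).withDensity (gE n t x) with hν
  have hprob : IsProbabilityMeasure ν := ⟨by
    rw [hν, withDensity_apply _ MeasurableSet.univ, Measure.restrict_univ]; exact lintegral_gE n ht x⟩
  have e1 : ∫⁻ y, gE n t x y * f y = ∫⁻ y, f y ∂ν := by
    rw [hν, lintegral_withDensity_eq_lintegral_mul _ hg hf]; rfl
  have e2 : ∫⁻ y, gE n t x y * f y ^ P = ∫⁻ y, f y ^ P ∂ν := by
    rw [hν, lintegral_withDensity_eq_lintegral_mul _ hg (hf.pow_const P)]; rfl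
  rw [e1, e2]
  have hP0 : 0 < P := by linarith
  have h := eLpNorm_le_eLpNorm_of_exponent_le (μ := ν) (f := f) (p := 1) (q := ENNReal.ofReal P)
    (by simpa using hP) hf.aestronglyMeasurable
  rw [eLpNorm_one_eq_lintegral_enorm, eLpNorm_eq_lintegral_rpow_enorm_toReal (by simpa using hP0) (by simp),
    ENNReal.toReal_ofReal hP0.le] at h
  simp only [enorm_eq_self] at h
  have := ENNReal.rpow_le_rpow h hP0.le
  rwa [← ENNReal.rpow_mul, one_div_mul_cancel hP0.ne', ENNReal.rpow_one] at this

theorem conv_eLpNorm (n : ℕ) {t : ℝ} (ht : 0 < t) (f : Euc n → ℝ≥0∞) (hf : Measurable f)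
    (p q : ℝ≥0∞) (hp : 1 ≤ p) (hpq : p ≤ q) (htop : q = ⊤ → p = ⊤) :
    eLpNorm (fun x => ∫⁻ y, gE n t x y * f y) q volume ≤
      ENNReal.ofReal (t ^ (-(n : ℝ) / 2 * ((p⁻¹).toReal - (q⁻¹).toReal))) * eLpNorm f p volume := by
  rcases eq_or_ne q ⊤ with rfl | hq
  · rw [htop rfl]
    simp only [eLpNorm_exponent_top, ENNReal.inv_top, ENNReal.toReal_zero, sub_self, mul_zero, Real.rpow_zero,
      ENNReal.ofReal_one, one_mul]
    refine eLpNormEssSup_le_of_ae_enorm_bound (Eventually.of_forall fun x => ?_)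
    rw [enorm_eq_self]
    calc ∫⁻ y, gE n t x y * f y ≤ ∫⁻ y, gE n t x y * eLpNormEssSup f volume := by
          refine lintegral_mono_ae ?_
          filter_upwards [enorm_ae_le_eLpNormEssSup f volume] with y hy
          rw [enorm_eq_self] at hy
          gcongr
      _ = _ := by
          rw [lintegral_mul_const _ (show Measurable fun y => gE n t x y by fun_prop),
            lintegral_gE n ht, one_mul]
  · have hpt : p ≠ ⊤ := ne_top_of_le_ne_top hq hpq
    have hp0 : p ≠ 0 := by rintro rfl; simp at hp
    have hq0 : q ≠ 0 := by rintro rfl; simp at hpq; exact hp0 hpq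
    rw [eLpNorm_eq_lintegral_rpow_enorm_toReal hq0 hq, eLpNorm_eq_lintegral_rpow_enorm_toReal hp0 hpt,
      ENNReal.toReal_inv, ENNReal.toReal_inv]
    simp only [enorm_eq_self]
    have hP1 : 1 ≤ p.toReal := by
      rw [← ENNReal.toReal_one]; exact (ENNReal.toReal_le_toReal (by simp) hpt).2 hp
    have hPQ : p.toReal ≤ q.toReal := (ENNReal.toReal_le_toReal hpt hq).2 hpq
    set P := p.toReal
    set Q := q.toReal
    have hP0 : 0 < P := by linarith
    have hQ0 : 0 < Q := by linarith
    set I := ∫⁻ y, f y ^ P with hI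
    set K := ENNReal.ofReal (t ^ (-(n : ℝ) / 2)) with hK
    have hr : 0 ≤ Q / P - 1 := by rw [sub_nonneg, one_le_div hP0]; exact hPQ
    have hmeas : Measurable fun z : Euc n × Euc n => gE n t z.1 z.2 * f z.2 ^ P := by fun_prop
    have hPsi : ∀ x, ∫⁻ y, gE n t x y * f y ^ P ≤ K * I := by
      intro x
      rw [hI, ← lintegral_const_mul _ (hf.pow_const P)]
      refine lintegral_mono fun y => ?_
      dsimp only
      gcongr
      exact ENNReal.ofReal_le_ofReal (heatKernel_le n t x y ht)
    have hPsiI : ∫⁻ x, ∫⁻ y, gE n t x y * f y ^ P = I := by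
      rw [lintegral_lintegral_swap hmeas.aemeasurable]
      refine lintegral_congr fun y => ?_
      rw [lintegral_mul_const _ (show Measurable fun x => gE n t x y by fun_prop), lintegral_gE' n ht, one_mul]
    have hmain : ∫⁻ x, (∫⁻ y, gE n t x y * f y) ^ Q ≤ (K * I) ^ (Q / P - 1) * I := by
      calc ∫⁻ x, (∫⁻ y, gE n t x y * f y) ^ Q
          ≤ ∫⁻ x, (K * I) ^ (Q / P - 1) * ∫⁻ y, gE n t x y * f y ^ P := by
            refine lintegral_mono fun x => ?_
            dsimp only
            have h1 := ENNReal.rpow_le_rpow (jensen_gE n ht x f hf P hP1) (show 0 ≤ Q / P by positivity)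
            rw [← ENNReal.rpow_mul, show P * (Q / P) = Q by field_simp] at h1
            refine h1.trans ?_
            nth_rewrite 1 [show Q / P = (Q / P - 1) + 1 by ring]
            rw [ENNReal.rpow_add_of_nonneg _ _ hr zero_le_one, ENNReal.rpow_one]
            gcongr
            exact hPsi x
        _ = _ := by
            rw [lintegral_const_mul _ hmeas.lintegral_prod_right', hPsiI]
    have := ENNReal.rpow_le_rpow hmain (show 0 ≤ 1 / Q by positivity)
    refine this.trans (le_of_eq ?_)
    rw [ENNReal.mul_rpow_of_nonneg _ _ hr, mul_assoc]
    have : I ^ (Q / P - 1) * I = I ^ (Q / P) := by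
      nth_rewrite 2 [← ENNReal.rpow_one I]
      rw [← ENNReal.rpow_add_of_nonneg _ _ hr zero_le_one]; simp
    rw [this, ENNReal.mul_rpow_of_nonneg _ _ (by positivity), ← ENNReal.rpow_mul, ← ENNReal.rpow_mul]
    congr 1
    · rw [hK, ENNReal.ofReal_rpow_of_pos (by positivity), ← Real.rpow_mul ht.le]
      congr 3; field_simp
    · congr 1; field_simp

theorem toReal_inv_eq (p : ℝ≥0∞) : (p⁻¹).toReal = 1 / p.toReal := by
  rw [ENNReal.toReal_inv, one_div]

/-- Pointwise kernel bound on a pair of annuli. -/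
theorem pointwise_piece (n : ℕ) (hn : 1 ≤ n) (p q : ℝ≥0∞) (hp : 1 ≤ p) :
    ∃ C : ℝ, 0 < C ∧ ∀ (t : ℝ) (j k : ℤ) (g0 : ℝ) (f : Euc n → ℝ≥0∞) (D : ℝ) (B : ℝ≥0∞), 0 ≤ g0 → 0 ≤ D →
      Measurable f → (∀ x ∈ annulus n j, ∀ y ∈ annulus n k, heatKernel n t x y ≤ g0) →
      eLpNorm f p (volume.restrict (annulus n k)) ≤ ENNReal.ofReal D * B →
      eLpNorm (fun x => ∫⁻ y in annulus n k, gE n t x y * f y) q (volume.restrict (annulus n j)) ≤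
        ENNReal.ofReal (C * g0 * D * ((2 : ℝ) ^ (k : ℝ)) ^ ((n : ℝ) * (1 - (p⁻¹).toReal)) *
          ((2 : ℝ) ^ (j : ℝ)) ^ ((n : ℝ) * (q⁻¹).toReal)) * B := by
  obtain ⟨C0, hC0, hvol⟩ := annulus_volume n hn
  have hip : 0 ≤ 1 - (p⁻¹).toReal := by
    have : (p⁻¹).toReal ≤ (1 : ℝ≥0∞).toReal :=
      (ENNReal.toReal_le_toReal (by simp; rintro rfl; simp at hp) (by simp)).2 (by simpa using hp)
    simpa using this
  have hiq : 0 ≤ (q⁻¹).toReal := ENNReal.toReal_nonneg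
  refine ⟨C0 ^ (1 - (p⁻¹).toReal) * C0 ^ (q⁻¹).toReal, by positivity, ?_⟩
  intro t j k g0 f D B hg0 hD hf hker hfB
  have hL1 : ∫⁻ y in annulus n k, f y ≤ ENNReal.ofReal D * B *
      ENNReal.ofReal (C0 * ((2 : ℝ) ^ (k : ℝ)) ^ (n : ℝ)) ^ (1 - (p⁻¹).toReal) := by
    have h := eLpNorm_le_eLpNorm_mul_rpow_measure_univ (μ := volume.restrict (annulus n k)) hp
      hf.aestronglyMeasurable
    rw [eLpNorm_one_eq_lintegral_enorm] at h
    simp only [enorm_eq_self, Measure.restrict_apply_univ, ENNReal.toReal_one, div_one] at h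
    rw [← toReal_inv_eq] at h
    refine h.trans ?_
    gcongr
    exact hvol k
  have hpt : ∀ x ∈ annulus n j, ∫⁻ y in annulus n k, gE n t x y * f y ≤
      ENNReal.ofReal g0 * (ENNReal.ofReal D * B *
      ENNReal.ofReal (C0 * ((2 : ℝ) ^ (k : ℝ)) ^ (n : ℝ)) ^ (1 - (p⁻¹).toReal)) := by
    intro x hx
    calc ∫⁻ y in annulus n k, gE n t x y * f y ≤ ∫⁻ y in annulus n k, ENNReal.ofReal g0 * f y := by
          refine setLIntegral_mono' (annulus_measurable n k) fun y hy => ?_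
          gcongr
          exact ENNReal.ofReal_le_ofReal (hker x hx y hy)
      _ = ENNReal.ofReal g0 * ∫⁻ y in annulus n k, f y := lintegral_const_mul _ hf
      _ ≤ _ := by gcongr
  have hb := eLpNorm_le_of_ae_enorm_bound (p := q) (μ := volume.restrict (annulus n j))
    (f := fun x => ∫⁻ y in annulus n k, gE n t x y * f y)
    (C := ENNReal.ofReal g0 * (ENNReal.ofReal D * B *
      ENNReal.ofReal (C0 * ((2 : ℝ) ^ (k : ℝ)) ^ (n : ℝ)) ^ (1 - (p⁻¹).toReal)))
    (by
      filter_upwards [ae_restrict_mem (annulus_measurable n j)] with x hx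
      rw [enorm_eq_self]; exact hpt x hx)
  refine hb.trans ?_
  rw [Measure.restrict_apply_univ, smul_eq_mul, ← ENNReal.toReal_inv]
  calc _ ≤ ENNReal.ofReal g0 * (ENNReal.ofReal D * B *
      ENNReal.ofReal (C0 * ((2 : ℝ) ^ (k : ℝ)) ^ (n : ℝ)) ^ (1 - (p⁻¹).toReal)) *
      ENNReal.ofReal (C0 * ((2 : ℝ) ^ (j : ℝ)) ^ (n : ℝ)) ^ (q⁻¹).toReal := by
        gcongr; exact hvol j
    _ = _ := by
        rw [ENNReal.ofReal_rpow_of_pos (by positivity), ENNReal.ofReal_rpow_of_pos (by positivity),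
          Real.mul_rpow (by positivity) (by positivity), Real.mul_rpow (by positivity) (by positivity),
          ← Real.rpow_mul (by positivity) (n : ℝ) (1 - (p⁻¹).toReal),
          ← Real.rpow_mul (by positivity) (n : ℝ) ((q⁻¹).toReal)]
        set X := ((2 : ℝ) ^ (k : ℝ)) ^ ((n : ℝ) * (1 - (p⁻¹).toReal)) with hX
        set Y := ((2 : ℝ) ^ (j : ℝ)) ^ ((n : ℝ) * (q⁻¹).toReal) with hY
        have hX0 : 0 < X := by positivity
        have hY0 : 0 < Y := by positivity
        set c1 := C0 ^ (1 - (p⁻¹).toReal)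
        set c2 := C0 ^ (q⁻¹).toReal
        have hc1 : 0 < c1 := by positivity
        have hc2 : 0 < c2 := by positivity
        rw [show c1 * c2 * g0 * D * X * Y = g0 * (D * (c1 * X)) * (c2 * Y) by ring]
        rw [ENNReal.ofReal_mul (p := g0 * (D * (c1 * X))) (by positivity), ENNReal.ofReal_mul (p := g0) hg0, ENNReal.ofReal_mul (p := D) hD]
        ring

theorem tsum_min_bound (b : ℝ) (hb : 0 < b) :
    ∃ C : ℝ, 0 < C ∧ ∀ R : ℝ, 0 < R →
      ∑' k : ℤ, ENNReal.ofReal (min (((2 : ℝ) ^ (k : ℝ) / R) ^ b) (((2 : ℝ) ^ (k : ℝ) / R) ^ (-b))) ≤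
        ENNReal.ofReal C := by
  set F : ℤ → ℝ := fun i => (2 : ℝ) ^ b * ((2 : ℝ) ^ (-b)) ^ i.natAbs with hF
  have hlt : (2 : ℝ) ^ (-b) < 1 := Real.rpow_lt_one_of_one_lt_of_neg (by norm_num) (by linarith)
  have hg : Summable fun m : ℕ => (2 : ℝ) ^ b * ((2 : ℝ) ^ (-b)) ^ m :=
    (summable_geometric_of_lt_one (by positivity) hlt).mul_left _
  have hFs : Summable F := by
    apply Summable.of_nat_of_neg
    · simpa [hF] using hg
    · simpa [hF] using hg
  have hF0 : ∀ i, 0 < F i := fun i => by simp only [hF]; positivity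
  refine ⟨∑' i, F i, hFs.tsum_pos (fun i => (hF0 i).le) 0 (hF0 0), fun R hR => ?_⟩
  obtain ⟨k0, hk0⟩ := exists_mem_Ico_zpow (x := R) (y := 2) hR (by norm_num)
  rw [ENNReal.ofReal_tsum_of_nonneg (fun i => (hF0 i).le) hFs,
    ← (Equiv.subRight k0).tsum_eq (fun i => ENNReal.ofReal (F i))]
  refine ENNReal.tsum_le_tsum fun k => ENNReal.ofReal_le_ofReal ?_
  simp only [Equiv.subRight_apply]
  have h1 : (2 : ℝ) ^ (k : ℝ) / R ≤ (2 : ℝ) ^ ((k : ℝ) - k0) := by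
    rw [Real.rpow_sub (by norm_num), Real.rpow_intCast 2 k0]
    gcongr
    exact hk0.1
  have h2 : (2 : ℝ) ^ ((k : ℝ) - k0 - 1) ≤ (2 : ℝ) ^ (k : ℝ) / R := by
    rw [sub_sub, Real.rpow_sub (by norm_num)]
    gcongr
    have := hk0.2.le
    rw [← Real.rpow_intCast] at this
    push_cast at this
    exact this
  have hy : 0 < (2 : ℝ) ^ (k : ℝ) / R := by positivity
  rcases le_total k k0 with hk | hk
  · refine (min_le_left _ _).trans ?_
    calc _ ≤ ((2 : ℝ) ^ ((k : ℝ) - k0)) ^ b := by gcongr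
      _ = ((2 : ℝ) ^ (-b)) ^ (k - k0).natAbs := by
          rw [← Real.rpow_natCast, ← Real.rpow_mul (by norm_num), ← Real.rpow_mul (by norm_num)]
          congr 1
          have : (((k - k0).natAbs : ℕ) : ℝ) = (k0 : ℝ) - k := by
            rw [Nat.cast_natAbs, abs_of_nonpos (by omega)]; push_cast; ring
          rw [this]; ring
      _ ≤ _ := by
          simp only [hF]
          apply le_mul_of_one_le_left (by positivity)
          exact Real.one_le_rpow (by norm_num) hb.le
  · refine (min_le_right _ _).trans ?_
    calc _ ≤ ((2 : ℝ) ^ ((k : ℝ) - k0 - 1)) ^ (-b) :=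
          Real.rpow_le_rpow_of_nonpos (by positivity) h2 (by linarith)
      _ = _ := by
          simp only [hF]
          rw [← Real.rpow_natCast, ← Real.rpow_mul (by norm_num), ← Real.rpow_mul (by norm_num),
            ← Real.rpow_add (by norm_num)]
          congr 1
          have : (((k - k0).natAbs : ℕ) : ℝ) = (k : ℝ) - k0 := by
            rw [Nat.cast_natAbs, abs_of_nonneg (by omega)]; push_cast; ring
          rw [this]; ring

theorem real_aux (x y z a b : ℝ) (hx : 0 < x) (hy : 0 < y) (hxz : x ≤ z) (hyz : y ≤ z) (ha : 0 ≤ a)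
    (hb : 0 < b) : x ^ a * y ^ b * min (z ^ (-a)) (z ^ (-(a + 2 * b))) ≤ min (y ^ b) (y ^ (-b)) := by
  have hz : 0 < z := by linarith
  have hxa : x ^ a ≤ z ^ a := by gcongr
  have h0 : z ^ a * z ^ (-a) = 1 := by rw [← Real.rpow_add hz]; simp
  apply le_min
  · calc _ ≤ z ^ a * y ^ b * z ^ (-a) := by gcongr; exact min_le_left _ _
      _ = y ^ b * (z ^ a * z ^ (-a)) := by ring
      _ = _ := by rw [h0, mul_one]
  · calc _ ≤ z ^ a * y ^ b * z ^ (-(a + 2 * b)) := by gcongr; exact min_le_right _ _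
      _ = y ^ b * (z ^ a * z ^ (-(a + 2 * b))) := by ring
      _ = y ^ b * z ^ (-(2 * b)) := by rw [← Real.rpow_add hz]; congr 2; ring
      _ ≤ y ^ b * y ^ (-(2 * b)) := by
          gcongr 1
          exact Real.rpow_le_rpow_of_nonpos hy hyz (by linarith)
      _ = _ := by rw [← Real.rpow_add hy]; congr 1; ring

theorem scale_aux (t X Y a b nn : ℝ) (ht : 0 < t) (hX : 0 < X) (hY : 0 < Y) :
    t ^ (-nn / 2) * (Y ^ b * X ^ a) = t ^ (-((nn - a - b) / 2)) * ((X / √t) ^ a * (Y / √t) ^ b) := by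
  rw [Real.div_rpow hX.le (by positivity), Real.div_rpow hY.le (by positivity), Real.sqrt_eq_rpow,
    ← Real.rpow_mul ht.le, ← Real.rpow_mul ht.le]
  have h : t ^ (-((nn - a - b) / 2)) = t ^ (-nn / 2) * t ^ (1 / 2 * a) * t ^ (1 / 2 * b) := by
    rw [← Real.rpow_add ht, ← Real.rpow_add ht]; congr 1; ring
  have h1 : 0 < t ^ (1 / 2 * a) := by positivity
  have h2 : 0 < t ^ (1 / 2 * b) := by positivity
  rw [h]; field_simp

def mjk (b t : ℝ) (j k : ℤ) : ℝ :=
  min (((2 : ℝ) ^ (k : ℝ) / √t) ^ b) (((2 : ℝ) ^ (k : ℝ) / √t) ^ (-b)) + (if |k - j| ≤ 1 then 1 else 0)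

theorem mjk_pos (b t : ℝ) (ht : 0 < t) (j k : ℤ) : 0 < mjk b t j k := by
  unfold mjk
  have : 0 < min (((2 : ℝ) ^ (k : ℝ) / √t) ^ b) (((2 : ℝ) ^ (k : ℝ) / √t) ^ (-b)) := by
    apply lt_min <;> positivity
  split_ifs <;> linarith

theorem piece (n : ℕ) (hn : 1 ≤ n) (s s' : ℝ) (p q : ℝ≥0∞) (hp : 1 ≤ p) (hpq : p ≤ q)
    (htop : q = ⊤ → p = ⊤) (a b : ℝ) (ha : a = s + n * (q⁻¹).toReal) (ha0 : 0 ≤ a)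
    (hb : b = n - s' - n * (p⁻¹).toReal) (hb0 : 0 < b) (hss : s ≤ s') :
    ∃ C : ℝ, 0 < C ∧ ∀ (t : ℝ) (j k : ℤ) (f : Euc n → ℝ≥0∞) (B : ℝ≥0∞), 0 < t → Measurable f →
      eLpNorm f p (volume.restrict (annulus n k)) ≤ ENNReal.ofReal (((2 : ℝ) ^ (k : ℝ)) ^ (-s')) * B →
      eLpNorm (fun x => ∫⁻ y in annulus n k, gE n t x y * f y) q (volume.restrict (annulus n j)) ≤
        ENNReal.ofReal (C * (t ^ (-((n - a - b) / 2)) * ((2 : ℝ) ^ (j : ℝ)) ^ (-s) * mjk b t j k)) * B := by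
  obtain ⟨C0, hC0, hpp⟩ := pointwise_piece n hn p q hp
  obtain ⟨C1, hC1, hf1⟩ := heatKernel_far n a ha0
  obtain ⟨C2, hC2, hf2⟩ := heatKernel_far n (a + 2 * b) (by linarith)
  set C3 := max (C1 * 4 ^ a) (C2 * 4 ^ (a + 2 * b)) with hC3
  have hC3p : 0 < C3 := lt_max_of_lt_left (by positivity)
  refine ⟨C0 * C3 + C0 * 2 ^ b + 2 ^ |s'|, by positivity, ?_⟩
  intro t j k f B ht hf hfB
  set X := (2 : ℝ) ^ (j : ℝ) with hX
  set Y := (2 : ℝ) ^ (k : ℝ) with hY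
  have hX0 : 0 < X := by positivity
  have hY0 : 0 < Y := by positivity
  have hR : 0 < √t := by positivity
  have hm := mjk_pos b t ht j k
  set td := t ^ (-(((n : ℝ) - a - b) / 2)) with htd
  have htd0 : 0 < td := by positivity
  -- reformulated pointwise bound
  have hpw : ∀ g0, 0 ≤ g0 → (∀ x ∈ annulus n j, ∀ y ∈ annulus n k, heatKernel n t x y ≤ g0) →
      ∀ K, K ≤ C0 * C3 + C0 * 2 ^ b + 2 ^ |s'| →
      C0 * (g0 * (Y ^ b * X ^ a)) ≤ K * (td * mjk b t j k) →
      eLpNorm (fun x => ∫⁻ y in annulus n k, gE n t x y * f y) q (volume.restrict (annulus n j)) ≤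
        ENNReal.ofReal ((C0 * C3 + C0 * 2 ^ b + 2 ^ |s'|) * (td * X ^ (-s) * mjk b t j k)) * B := by
    intro g0 hg0 hker K hKle hK
    refine (hpp t j k g0 f _ B hg0 (by positivity) hf hker hfB).trans ?_
    gcongr ENNReal.ofReal ?_ * B
    have e : C0 * g0 * Y ^ (-s') * Y ^ ((n : ℝ) * (1 - (p⁻¹).toReal)) * X ^ ((n : ℝ) * (q⁻¹).toReal)
        = C0 * (g0 * (Y ^ b * X ^ a)) * X ^ (-s) := by
      have e1 : Y ^ b = Y ^ (-s') * Y ^ ((n : ℝ) * (1 - (p⁻¹).toReal)) := by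
        rw [← Real.rpow_add hY0, hb]; congr 1; ring
      have e2 : X ^ ((n : ℝ) * (q⁻¹).toReal) = X ^ a * X ^ (-s) := by
        rw [← Real.rpow_add hX0, ha]; congr 1; ring
      rw [e1, e2]; ring
    rw [e]
    calc _ ≤ K * (td * mjk b t j k) * X ^ (-s) := by gcongr
      _ ≤ (C0 * C3 + C0 * 2 ^ b + 2 ^ |s'|) * (td * mjk b t j k) * X ^ (-s) := by gcongr
      _ = _ := by ring
  rcases le_or_gt 2 |k - j| with hjk | hjk
  · set z := max X Y / √t with hz
    have hz0 : 0 < z := by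
      have : 0 < max X Y := lt_max_of_lt_left hX0
      positivity
    refine hpw (C3 * t ^ (-(n : ℝ) / 2) * min (z ^ (-a)) (z ^ (-(a + 2 * b))))
      (by have : 0 < min (z ^ (-a)) (z ^ (-(a + 2 * b))) := by apply lt_min <;> positivity
          positivity) ?_ (C0 * C3)
      (by have : 0 < C0 * (2 : ℝ) ^ b := by positivity
          have : 0 < (2 : ℝ) ^ |s'| := by positivity
          linarith) ?_
    · intro x hx y hy
      have hd := far_dist n j k hjk x y hx hy
      have hρ : 0 < max X Y / 4 := by
        have : 0 < max X Y := lt_max_of_lt_left hX0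
        positivity
      have ez : ∀ N : ℝ, (max X Y / 4 / √t) ^ (-N) = 4 ^ N * z ^ (-N) := by
        intro N
        rw [show max X Y / 4 / √t = z / 4 by rw [hz]; ring, Real.div_rpow hz0.le (by norm_num),
          Real.rpow_neg (by norm_num : (0 : ℝ) ≤ 4), div_inv_eq_mul, mul_comm]
      rw [mul_min_of_nonneg _ _ (by positivity)]
      apply le_min
      · refine (hf1 t x y _ ht hρ hd).trans ?_
        rw [ez]
        calc _ = (C1 * 4 ^ a) * t ^ (-(n : ℝ) / 2) * z ^ (-a) := by ring
          _ ≤ _ := by gcongr; exact le_max_left _ _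
      · refine (hf2 t x y _ ht hρ hd).trans ?_
        rw [ez]
        calc _ = (C2 * 4 ^ (a + 2 * b)) * t ^ (-(n : ℝ) / 2) * z ^ (-(a + 2 * b)) := by ring
          _ ≤ _ := by gcongr; exact le_max_right _ _
    · have h := real_aux (X / √t) (Y / √t) z a b (by positivity) (by positivity)
        (by rw [hz]; gcongr; exact le_max_left _ _) (by rw [hz]; gcongr; exact le_max_right _ _) ha0 hb0
      have hle : min ((Y / √t) ^ b) ((Y / √t) ^ (-b)) ≤ mjk b t j k := by
        unfold mjk
        have : (0 : ℝ) ≤ if |k - j| ≤ 1 then 1 else 0 := by split_ifs <;> norm_num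
        linarith
      calc C0 * (C3 * t ^ (-(n : ℝ) / 2) * min (z ^ (-a)) (z ^ (-(a + 2 * b))) * (Y ^ b * X ^ a))
          = C0 * C3 * (t ^ (-(n : ℝ) / 2) * (Y ^ b * X ^ a)) * min (z ^ (-a)) (z ^ (-(a + 2 * b))) := by ring
        _ = C0 * C3 * td * ((X / √t) ^ a * (Y / √t) ^ b * min (z ^ (-a)) (z ^ (-(a + 2 * b)))) := by
            rw [scale_aux t X Y a b n ht hX0 hY0]; ring
        _ ≤ C0 * C3 * td * mjk b t j k := by gcongr; exact h.trans hle
        _ = _ := by ring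
  · have hjk1 : |k - j| ≤ 1 := by omega
    have hm1 : 1 ≤ mjk b t j k := by
      unfold mjk
      rw [if_pos hjk1]
      have : 0 < min (((2 : ℝ) ^ (k : ℝ) / √t) ^ b) (((2 : ℝ) ^ (k : ℝ) / √t) ^ (-b)) := by
        apply lt_min <;> positivity
      linarith
    have hkj : (|(k : ℝ) - j|) ≤ 1 := by exact_mod_cast hjk1
    rcases le_or_gt X (√t) with hXR | hXR
    · refine hpw (t ^ (-(n : ℝ) / 2)) (by positivity) (fun x _ y _ => heatKernel_le n t x y ht)
        (C0 * 2 ^ b) (by have : 0 < (2 : ℝ) ^ |s'| := by positivity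
                         have : 0 < C0 * C3 := by positivity
                         linarith) ?_
      rw [scale_aux t X Y a b n ht hX0 hY0]
      have h1 : (X / √t) ^ a ≤ 1 := by
        apply Real.rpow_le_one (by positivity) _ ha0
        rwa [div_le_one hR]
      have hYX : Y ≤ 2 * X := by
        calc Y ≤ (2 : ℝ) ^ ((1 : ℝ) + j) := by
              apply Real.rpow_le_rpow_of_exponent_le (by norm_num)
              have := le_abs_self ((k : ℝ) - j); linarith
          _ = 2 * X := by rw [Real.rpow_add (by norm_num), Real.rpow_one]
      have h2 : (Y / √t) ^ b ≤ 2 ^ b := by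
        gcongr
        rw [div_le_iff₀ hR]; linarith
      calc C0 * (td * ((X / √t) ^ a * (Y / √t) ^ b)) ≤ C0 * (td * (1 * 2 ^ b)) := by gcongr
        _ = C0 * 2 ^ b * (td * 1) := by ring
        _ ≤ _ := by gcongr
    · have hconv := conv_eLpNorm n ht ((annulus n k).indicator f)
        (hf.indicator (annulus_measurable n k)) p q hp hpq htop
      rw [eLpNorm_indicator_eq_eLpNorm_restrict (annulus_measurable n k)] at hconv
      have e : (fun x => ∫⁻ y in annulus n k, gE n t x y * f y) =
          fun x => ∫⁻ y, gE n t x y * (annulus n k).indicator f y := by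
        funext x
        rw [← lintegral_indicator (annulus_measurable n k)]
        refine lintegral_congr fun y => ?_
        by_cases hy : y ∈ annulus n k <;> simp [hy]
      rw [e]
      refine ((eLpNorm_mono_measure _ Measure.restrict_le_self).trans hconv).trans ?_
      calc _ ≤ ENNReal.ofReal (t ^ (-(n : ℝ) / 2 * ((p⁻¹).toReal - (q⁻¹).toReal))) * (ENNReal.ofReal (Y ^ (-s')) * B) := by
            gcongr
        _ = ENNReal.ofReal (t ^ (-(n : ℝ) / 2 * ((p⁻¹).toReal - (q⁻¹).toReal)) * Y ^ (-s')) * B := by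
            rw [ENNReal.ofReal_mul (by positivity), mul_assoc]
        _ ≤ _ := by
            gcongr ENNReal.ofReal ?_ * B
            have h1 : Y ^ (-s') ≤ 2 ^ |s'| * X ^ (-s') := by
              rw [hY, hX, ← Real.rpow_mul (by norm_num), ← Real.rpow_mul (by norm_num), ← Real.rpow_add (by norm_num)]
              apply Real.rpow_le_rpow_of_exponent_le (by norm_num)
              have : ((j : ℝ) - k) * s' ≤ |s'| := by
                calc ((j : ℝ) - k) * s' ≤ |((j : ℝ) - k) * s'| := le_abs_self _
                  _ = |(k : ℝ) - j| * |s'| := by rw [abs_mul, abs_sub_comm]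
                  _ ≤ 1 * |s'| := by gcongr
                  _ = _ := one_mul _
              linarith
            have h2 : X ^ (-s') ≤ X ^ (-s) * √t ^ (-(s' - s)) := by
              rw [show -s' = -s + -(s' - s) by ring, Real.rpow_add hX0]
              gcongr 1
              exact Real.rpow_le_rpow_of_nonpos hR hXR.le (by linarith)
            have h3 : t ^ (-(n : ℝ) / 2 * ((p⁻¹).toReal - (q⁻¹).toReal)) * √t ^ (-(s' - s)) = td := by
              rw [Real.sqrt_eq_rpow, ← Real.rpow_mul ht.le, ← Real.rpow_add ht, htd, ha, hb]
              congr 1; ring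
            calc _ ≤ t ^ (-(n : ℝ) / 2 * ((p⁻¹).toReal - (q⁻¹).toReal)) * (2 ^ |s'| * (X ^ (-s) * √t ^ (-(s' - s)))) := by
                  gcongr; exact h1.trans (by gcongr)
              _ = 2 ^ |s'| * ((t ^ (-(n : ℝ) / 2 * ((p⁻¹).toReal - (q⁻¹).toReal)) * √t ^ (-(s' - s))) * X ^ (-s) * 1) := by ring
              _ = 2 ^ |s'| * (td * X ^ (-s) * 1) := by rw [h3]
              _ ≤ _ := by
                  gcongr
                  have : 0 < C0 * C3 := by positivity
                  have : 0 < C0 * (2 : ℝ) ^ b := by positivity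
                  linarith

theorem mjk_sum (b : ℝ) (hb : 0 < b) :
    ∃ C : ℝ, 0 < C ∧ ∀ (t : ℝ) (j : ℤ), 0 < t → ∑' k : ℤ, ENNReal.ofReal (mjk b t j k) ≤ ENNReal.ofReal C := by
  obtain ⟨C, hC, h⟩ := tsum_min_bound b hb
  refine ⟨C + 3, by linarith, fun t j ht => ?_⟩
  have h1 : ∀ k, ENNReal.ofReal (mjk b t j k) = ENNReal.ofReal (min (((2 : ℝ) ^ (k : ℝ) / √t) ^ b) (((2 : ℝ) ^ (k : ℝ) / √t) ^ (-b))) +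
      ENNReal.ofReal (if |k - j| ≤ 1 then 1 else 0) := by
    intro k
    unfold mjk
    rw [ENNReal.ofReal_add]
    · apply le_min <;> positivity
    · split_ifs <;> norm_num
  rw [tsum_congr h1, ENNReal.tsum_add, ENNReal.ofReal_add hC.le (by norm_num)]
  gcongr
  · exact h (√t) (by positivity)
  · rw [tsum_eq_sum (s := Finset.Icc (j - 1) (j + 1))]
    · calc _ ≤ ∑ k ∈ Finset.Icc (j - 1) (j + 1), (1 : ℝ≥0∞) := by
            refine Finset.sum_le_sum fun k _ => ?_
            split_ifs <;> simp
        _ = _ := by simp; ring_nf; norm_num; rfl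
    · intro k hk
      rw [if_neg]
      · simp
      · intro hh
        apply hk
        rw [abs_le] at hh
        simp; omega

theorem smoothing (n : ℕ) (hn : 1 ≤ n) (s s' : ℝ) (p q : ℝ≥0∞) (hp : 1 ≤ p) (hpq : p ≤ q)
    (htop : q = ⊤ → p = ⊤) (a b : ℝ) (ha : a = s + n * (q⁻¹).toReal) (ha0 : 0 ≤ a)
    (hb : b = n - s' - n * (p⁻¹).toReal) (hb0 : 0 < b) (hss : s ≤ s') :
    ∃ C : ℝ, 0 < C ∧ ∀ (t : ℝ) (f : Euc n → ℝ≥0∞) (B : ℝ≥0∞), 0 < t → Measurable f → B ≠ 0 → B ≠ ⊤ →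
      (∀ k, eLpNorm f p (volume.restrict (annulus n k)) ≤ ENNReal.ofReal (((2 : ℝ) ^ (k : ℝ)) ^ (-s')) * B) →
      ∀ j : ℤ, eLpNorm (fun x => ∫⁻ y, gE n t x y * f y) q (volume.restrict (annulus n j)) ≤
        ENNReal.ofReal (C * (t ^ (-((n - a - b) / 2)) * ((2 : ℝ) ^ (j : ℝ)) ^ (-s))) * B := by
  obtain ⟨C0, hC0, hpiece⟩ := piece n hn s s' p q hp hpq htop a b ha ha0 hb hb0 hss
  obtain ⟨C1, hC1, hsum⟩ := mjk_sum b hb0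
  refine ⟨C0 * C1, by positivity, ?_⟩
  intro t f B ht hf hB0 hBt hfB j
  have e : (fun x => ∫⁻ y, gE n t x y * f y) =
      fun x => ∫⁻ k : ℤ, (∫⁻ y in annulus n k, gE n t x y * f y) ∂Measure.count := by
    funext x
    rw [lintegral_annuli n hn, lintegral_count]
  rw [e]
  have hm : ∀ k, Measurable fun x => ∫⁻ y in annulus n k, gE n t x y * f y := by
    intro k
    have : Measurable fun z : Euc n × Euc n => gE n t z.1 z.2 * f z.2 := by fun_prop
    exact this.lintegral_prod_right'
  refine (minkowski_bound (volume.restrict (annulus n j)) Measure.count q (hp.trans hpq)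
    (fun k x => ∫⁻ y in annulus n k, gE n t x y * f y)
    (measurable_from_prod_countable_right hm)
    (fun k => ENNReal.ofReal (C0 * (t ^ (-((n - a - b) / 2)) * ((2 : ℝ) ^ (j : ℝ)) ^ (-s) * mjk b t j k)) * B)
    (measurable_of_countable _) ?_ ?_ ?_).trans ?_
  · refine Eventually.of_forall fun k => ?_
    have := mjk_pos b t ht j k
    refine mul_ne_zero ?_ hB0
    rw [ne_eq, ENNReal.ofReal_eq_zero, not_le]
    positivity
  · exact Eventually.of_forall fun k => ENNReal.mul_ne_top ENNReal.ofReal_ne_top hBt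
  · exact Eventually.of_forall fun k => hpiece t j k f B ht hf (hfB k)
  · rw [lintegral_count, ENNReal.tsum_mul_right]
    gcongr
    calc _ = ∑' k, ENNReal.ofReal (C0 * (t ^ (-((n - a - b) / 2)) * ((2 : ℝ) ^ (j : ℝ)) ^ (-s))) * ENNReal.ofReal (mjk b t j k) := by
          refine tsum_congr fun k => ?_
          rw [← ENNReal.ofReal_mul (by positivity), mul_assoc C0]
      _ ≤ ENNReal.ofReal (C0 * (t ^ (-((n - a - b) / 2)) * ((2 : ℝ) ^ (j : ℝ)) ^ (-s))) * ENNReal.ofReal C1 := by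
          rw [ENNReal.tsum_mul_left]
          gcongr
          exact hsum t j ht
      _ = _ := by
          rw [← ENNReal.ofReal_mul (by positivity)]
          congr 1; ring

theorem time_integral (δ l t : ℝ) (hδ : δ < 1) (hl : 0 < l) :
    ∫⁻ τ in Ioo 0 t, ENNReal.ofReal ((t - τ) ^ (-δ) * Real.exp (l * τ)) ≤
      ENNReal.ofReal (Real.exp (l * t) * ((1 / l) ^ (1 - δ) * Real.Gamma (1 - δ))) := by
  have hI := Real.integral_rpow_mul_exp_neg_mul_Ioi (a := 1 - δ) (r := l) (by linarith) hl
  have hInt : IntegrableOn (fun u : ℝ => u ^ (1 - δ - 1) * Real.exp (-(l * u))) (Ioi 0) := by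
    by_contra hcon
    rw [integral_undef hcon] at hI
    have := Real.Gamma_pos_of_pos (s := 1 - δ) (by linarith)
    have : 0 < (1 / l) ^ (1 - δ) * Real.Gamma (1 - δ) := by positivity
    linarith
  set h : ℝ → ℝ≥0∞ := (Ioi 0).indicator fun u => ENNReal.ofReal (u ^ (1 - δ - 1) * Real.exp (-(l * u))) with hh
  calc ∫⁻ τ in Ioo 0 t, ENNReal.ofReal ((t - τ) ^ (-δ) * Real.exp (l * τ))
      = ∫⁻ τ in Ioo 0 t, ENNReal.ofReal (Real.exp (l * t)) * h (t - τ) := by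
        refine setLIntegral_congr_fun measurableSet_Ioo fun τ hτ => ?_
        have : t - τ ∈ Ioi (0 : ℝ) := by simpa using hτ.2
        simp only [hh, indicator_of_mem this]
        rw [← ENNReal.ofReal_mul (by positivity)]
        congr 1
        rw [mul_left_comm, ← Real.exp_add]
        congr 2 <;> ring
    _ ≤ ∫⁻ τ, ENNReal.ofReal (Real.exp (l * t)) * h (t - τ) := setLIntegral_le_lintegral _ _
    _ = ENNReal.ofReal (Real.exp (l * t)) * ∫⁻ τ, h (t - τ) := lintegral_const_mul' _ _ (by simp)
    _ = ENNReal.ofReal (Real.exp (l * t)) * ∫⁻ u, h u := by rw [lintegral_sub_left_eq_self h t]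
    _ = _ := by
        rw [ENNReal.ofReal_mul (by positivity), ← hI, hh, lintegral_indicator measurableSet_Ioi,
          ofReal_integral_eq_lintegral_ofReal hInt]
        filter_upwards [ae_restrict_mem measurableSet_Ioi] with u hu
        have : (0 : ℝ) < u := hu
        simp only [Pi.zero_apply]
        positivity

theorem herz_bound (n : ℕ) (s : ℝ) (q r : ℝ≥0∞) (hr : 0 < r) (f : Euc n → ℝ) (M : ℝ≥0∞)
    (h : herzNorm n s q r f ≤ M) (j : ℤ) :
    eLpNorm f q (volume.restrict (annulus n j)) ≤ ENNReal.ofReal (((2 : ℝ) ^ (j : ℝ)) ^ (-s)) * M := by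
  have key : ENNReal.ofReal ((2 : ℝ) ^ ((j : ℝ) * s)) *
      eLpNorm ((annulus n j).indicator f) q volume ≤ M := by
    unfold herzNorm at h
    split_ifs at h with hrt
    · exact (le_iSup (fun j : ℤ => ENNReal.ofReal ((2 : ℝ) ^ ((j : ℝ) * s)) *
        eLpNorm ((annulus n j).indicator f) q volume) j).trans h
    · have hr0 : 0 < r.toReal := ENNReal.toReal_pos hr.ne' hrt
      refine le_trans ?_ h
      have := ENNReal.le_tsum (f := fun j : ℤ => (ENNReal.ofReal ((2 : ℝ) ^ ((j : ℝ) * s)) *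
        eLpNorm ((annulus n j).indicator f) q volume) ^ r.toReal) j
      have h2 := ENNReal.rpow_le_rpow this (show 0 ≤ 1 / r.toReal by positivity)
      rwa [← ENNReal.rpow_mul, mul_one_div_cancel hr0.ne', ENNReal.rpow_one] at h2
  rw [eLpNorm_indicator_eq_eLpNorm_restrict (annulus_measurable n j)] at key
  calc eLpNorm f q (volume.restrict (annulus n j))
      = ENNReal.ofReal (((2 : ℝ) ^ (j : ℝ)) ^ (-s)) * (ENNReal.ofReal ((2 : ℝ) ^ ((j : ℝ) * s)) *
        eLpNorm f q (volume.restrict (annulus n j))) := by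
        rw [← mul_assoc, ← ENNReal.ofReal_mul (by positivity), ← Real.rpow_mul (by norm_num),
          ← Real.rpow_add (by norm_num)]
        simp
    _ ≤ _ := by gcongr

theorem pow_diff_aux (α a b : ℝ) (hα : 1 < α) (hb : 0 ≤ b) (hab : b ≤ a) :
    a ^ (α - 1) * a - b ^ (α - 1) * b ≤ α * (a ^ (α - 1) * (a - b)) := by
  rcases hb.eq_or_lt with rfl | hb0
  · simp only [mul_zero, sub_zero]
    have : 0 ≤ a ^ (α - 1) * a := by positivity
    nlinarith
  have ha : 0 < a := by linarith
  have h := one_add_mul_self_le_rpow_one_add (s := b / a - 1) (p := α) (by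
    have : 0 ≤ b / a := by positivity
    linarith) hα.le
  rw [add_sub_cancel, Real.div_rpow hb ha.le, le_div_iff₀ (by positivity)] at h
  have e : ∀ x : ℝ, 0 < x → x ^ α = x ^ (α - 1) * x := fun x hx => by
    rw [Real.rpow_sub_one hx.ne']; field_simp
  rw [e a ha, e b hb0] at h
  have e2 : (1 + α * (b / a - 1)) * (a ^ (α - 1) * a) = a ^ (α - 1) * a - α * (a ^ (α - 1) * (a - b)) := by
    field_simp; ring
  linarith

theorem pow_diff (α a b : ℝ) (hα : 1 < α) :
    |(|a| ^ (α - 1) * a - |b| ^ (α - 1) * b)| ≤ α * ((|a| + |b|) ^ (α - 1) * |a - b|) := by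
  have hα1 : 0 ≤ α - 1 := by linarith
  -- nonneg case
  have h1 : ∀ a b : ℝ, 0 ≤ b → b ≤ a →
      |(|a| ^ (α - 1) * a - |b| ^ (α - 1) * b)| ≤ α * ((|a| + |b|) ^ (α - 1) * |a - b|) := by
    intro a b hb hab
    have ha : 0 ≤ a := hb.trans hab
    rw [abs_of_nonneg ha, abs_of_nonneg hb, abs_of_nonneg (sub_nonneg.2 hab), abs_of_nonneg]
    · refine (pow_diff_aux α a b hα hb hab).trans ?_
      have : 0 ≤ a - b := sub_nonneg.2 hab
      gcongr; linarith
    · rw [sub_nonneg]; gcongr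
  have h2 : ∀ a b : ℝ, 0 ≤ b → 0 ≤ a →
      |(|a| ^ (α - 1) * a - |b| ^ (α - 1) * b)| ≤ α * ((|a| + |b|) ^ (α - 1) * |a - b|) := by
    intro a b hb ha
    rcases le_total b a with h | h
    · exact h1 a b hb h
    · have := h1 b a ha h
      rwa [abs_sub_comm, add_comm, abs_sub_comm b a] at this
  have h3 : ∀ a b : ℝ, b ≤ 0 → 0 ≤ a →
      |(|a| ^ (α - 1) * a - |b| ^ (α - 1) * b)| ≤ α * ((|a| + |b|) ^ (α - 1) * |a - b|) := by
    intro a b hb ha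
    rw [abs_of_nonneg ha, abs_of_nonpos hb, abs_of_nonneg (by linarith : 0 ≤ a - b)]
    have hb' : 0 ≤ -b := by linarith
    rw [show a ^ (α - 1) * a - (-b) ^ (α - 1) * b = a ^ (α - 1) * a + (-b) ^ (α - 1) * (-b) by ring,
      abs_of_nonneg (by positivity)]
    calc _ ≤ (a + -b) ^ (α - 1) * a + (a + -b) ^ (α - 1) * (-b) := by
          gcongr <;> linarith
      _ = 1 * ((a + -b) ^ (α - 1) * (a - b)) := by ring
      _ ≤ _ := by
          have : 0 ≤ a - b := by linarith
          have : 0 ≤ a + -b := by linarith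
          gcongr
  have hneg : ∀ a b : ℝ, |(|-a| ^ (α - 1) * (-a) - |-b| ^ (α - 1) * (-b))| ≤ α * ((|-a| + |-b|) ^ (α - 1) * |-a - -b|) →
      |(|a| ^ (α - 1) * a - |b| ^ (α - 1) * b)| ≤ α * ((|a| + |b|) ^ (α - 1) * |a - b|) := by
    intro a b h
    rw [abs_neg a, abs_neg b, show |a| ^ (α - 1) * (-a) - |b| ^ (α - 1) * (-b) = -(|a| ^ (α - 1) * a - |b| ^ (α - 1) * b) by ring,
      abs_neg, show -a - -b = -(a - b) by ring, abs_neg] at h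
    exact h
  rcases le_total 0 a with ha | ha <;> rcases le_total 0 b with hb | hb
  · exact h2 a b hb ha
  · exact h3 a b hb ha
  · exact hneg a b (h3 (-a) (-b) (by linarith) (by linarith))
  · exact hneg a b (h2 (-a) (-b) (by linarith) (by linarith))

theorem p_facts (α : ℝ) (hα : 1 < α) (q : ℝ≥0∞) (hq : ENNReal.ofReal α ≤ q) :
    1 ≤ q / ENNReal.ofReal α ∧ q / ENNReal.ofReal α ≤ q ∧ (q = ⊤ → q / ENNReal.ofReal α = ⊤) ∧
    ((q / ENNReal.ofReal α)⁻¹).toReal = α * (q⁻¹).toReal := by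
  have h0 : ENNReal.ofReal α ≠ 0 := by
    rw [ne_eq, ENNReal.ofReal_eq_zero]; linarith
  have ht : ENNReal.ofReal α ≠ ⊤ := ENNReal.ofReal_ne_top
  refine ⟨?_, ?_, ?_, ?_⟩
  · rw [ENNReal.le_div_iff_mul_le (Or.inl h0) (Or.inl ht), one_mul]; exact hq
  · apply ENNReal.div_le_of_le_mul
    have : (1 : ℝ≥0∞) ≤ ENNReal.ofReal α := by
      rw [← ENNReal.ofReal_one]; exact ENNReal.ofReal_le_ofReal hα.le
    calc q = q * 1 := (mul_one q).symm
      _ ≤ _ := by gcongr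
  · rintro rfl
    exact ENNReal.top_div_of_ne_top ht
  · rw [ENNReal.inv_div (Or.inl ht) (Or.inl h0), div_eq_mul_inv, ENNReal.toReal_mul, ENNReal.toReal_ofReal (by linarith)]

theorem holder_piece {X : Type*} [MeasurableSpace X] (μ : Measure X) (α : ℝ) (hα : 1 < α) (q : ℝ≥0∞)
    (hq : ENNReal.ofReal α ≤ q) (V w : X → ℝ) (hV : Measurable V) (hw : Measurable w) (hV0 : ∀ x, 0 ≤ V x) :
    eLpNorm (fun x => V x ^ (α - 1) * |w x|) (q / ENNReal.ofReal α) μ ≤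
      eLpNorm V q μ ^ (α - 1) * eLpNorm w q μ := by
  have h0 : ENNReal.ofReal α ≠ 0 := by
    rw [ne_eq, ENNReal.ofReal_eq_zero]; linarith
  have h1 : ENNReal.ofReal (α - 1) ≠ 0 := by
    rw [ne_eq, ENNReal.ofReal_eq_zero]; linarith
  have ht : ENNReal.ofReal α ≠ ⊤ := ENNReal.ofReal_ne_top
  have ht1 : ENNReal.ofReal (α - 1) ≠ ⊤ := ENNReal.ofReal_ne_top
  haveI : ENNReal.HolderTriple (q / ENNReal.ofReal (α - 1)) q (q / ENNReal.ofReal α) := by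
    constructor
    rw [ENNReal.inv_div (Or.inl ht) (Or.inl h0), ENNReal.inv_div (Or.inl ht1) (Or.inl h1),
      div_eq_mul_inv, div_eq_mul_inv]
    have : ENNReal.ofReal α = ENNReal.ofReal (α - 1) + 1 := by
      rw [← ENNReal.ofReal_one, ← ENNReal.ofReal_add (by linarith) (by norm_num)]; congr 1; ring
    rw [this, add_mul, one_mul]
  have := eLpNorm_smul_le_mul_eLpNorm (μ := μ) (p := q / ENNReal.ofReal (α - 1)) (q := q) (r := q / ENNReal.ofReal α)
    (f := fun x => |w x|) (φ := fun x => V x ^ (α - 1)) (by fun_prop) (hV.pow_const _).aestronglyMeasurable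
  refine (le_of_eq ?_).trans (this.trans (le_of_eq ?_))
  · rfl
  · congr 1
    · have h2 : (fun x => V x ^ (α - 1)) = fun x => ‖V x‖ ^ (α - 1) := by
        funext x; rw [Real.norm_of_nonneg (hV0 x)]
      rw [h2, eLpNorm_norm_rpow V (by linarith), ENNReal.div_mul_cancel h1 ht1]
    · exact eLpNorm_norm w

theorem weight_bound (n : ℕ) (γ : ℝ) (k : ℤ) (x : Euc n) (hx : x ∈ annulus n k) :
    ‖x‖ ^ γ ≤ 2 ^ |γ| * ((2 : ℝ) ^ (k : ℝ)) ^ γ := by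
  obtain ⟨h1, h2⟩ := hx
  have hp : (0 : ℝ) < 2 ^ (k - 1) := by positivity
  have hx0 : 0 < ‖x‖ := hp.trans_le h1
  have hk : (2 : ℝ) ^ (k - 1) = 2 ^ (k : ℝ) / 2 := by
    rw [Real.rpow_intCast, zpow_sub_one₀ (by norm_num)]; rfl
  rw [← Real.rpow_intCast] at h2
  rw [hk] at h1
  have hK : (0 : ℝ) < 2 ^ (k : ℝ) := by positivity
  rcases le_total 0 γ with h | h
  · calc ‖x‖ ^ γ ≤ ((2 : ℝ) ^ (k : ℝ)) ^ γ := Real.rpow_le_rpow hx0.le h2.le h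
      _ = 1 * ((2 : ℝ) ^ (k : ℝ)) ^ γ := (one_mul _).symm
      _ ≤ _ := by
        gcongr
        exact Real.one_le_rpow (by norm_num) (abs_nonneg _)
  · calc ‖x‖ ^ γ ≤ ((2 : ℝ) ^ (k : ℝ) / 2) ^ γ := Real.rpow_le_rpow_of_nonpos (by positivity) h1 h
      _ = _ := by
        rw [Real.div_rpow hK.le (by norm_num), abs_of_nonpos h, Real.rpow_neg (by norm_num)]
        field_simp

theorem nonlin_piece (n : ℕ) (γ α s : ℝ) (hα : 1 < α) (q : ℝ≥0∞)
    (hq : ENNReal.ofReal α ≤ q) (V w : Euc n → ℝ) (hV : Measurable V) (hw : Measurable w) (hV0 : ∀ x, 0 ≤ V x)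
    (M : ℝ) (hM : 0 < M) (B : ℝ≥0∞) (k : ℤ)
    (h1 : eLpNorm V q (volume.restrict (annulus n k)) ≤ ENNReal.ofReal (((2:ℝ)^(k:ℝ))^(-s)) * ENNReal.ofReal M)
    (h2 : eLpNorm w q (volume.restrict (annulus n k)) ≤ ENNReal.ofReal (((2:ℝ)^(k:ℝ))^(-s)) * B) :
    eLpNorm (fun x => ENNReal.ofReal (‖x‖ ^ γ * (α * (V x ^ (α - 1) * |w x|)))) (q / ENNReal.ofReal α)
      (volume.restrict (annulus n k)) ≤
    ENNReal.ofReal (((2:ℝ)^(k:ℝ))^(-(α * s - γ))) * (ENNReal.ofReal (2 ^ |γ| * α * M ^ (α - 1)) * B) := by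
  have hK : (0 : ℝ) < 2 ^ (k : ℝ) := by positivity
  have hH := holder_piece (volume.restrict (annulus n k)) α hα q hq V w hV hw hV0
  have e1 : eLpNorm (fun x => ENNReal.ofReal (‖x‖ ^ γ * (α * (V x ^ (α - 1) * |w x|)))) (q / ENNReal.ofReal α)
      (volume.restrict (annulus n k)) ≤ ENNReal.ofReal (2 ^ |γ| * ((2 : ℝ) ^ (k : ℝ)) ^ γ * α) *
        eLpNorm (fun x => V x ^ (α - 1) * |w x|) (q / ENNReal.ofReal α) (volume.restrict (annulus n k)) := by
    have h3 : ∀ᵐ x ∂(volume.restrict (annulus n k)), ‖ENNReal.ofReal (‖x‖ ^ γ * (α * (V x ^ (α - 1) * |w x|)))‖ₑ ≤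
        ‖(2 ^ |γ| * ((2 : ℝ) ^ (k : ℝ)) ^ γ * α) • (fun x => V x ^ (α - 1) * |w x|) x‖ₑ := by
      filter_upwards [ae_restrict_mem (annulus_measurable n k)] with x hx
      have := weight_bound n γ k x hx
      have h4 : 0 ≤ V x ^ (α - 1) * |w x| := mul_nonneg (Real.rpow_nonneg (hV0 x) _) (abs_nonneg _)
      have hα0 : 0 ≤ α := by linarith
      rw [enorm_eq_self, smul_eq_mul, Real.enorm_of_nonneg (by positivity)]
      apply ENNReal.ofReal_le_ofReal
      rw [mul_assoc _ α]
      gcongr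
    refine (eLpNorm_mono_enorm_ae h3).trans ?_
    have := eLpNorm_const_smul_le (c := (2 ^ |γ| * ((2 : ℝ) ^ (k : ℝ)) ^ γ * α)) (f := fun x => V x ^ (α - 1) * |w x|)
      (p := q / ENNReal.ofReal α) (μ := volume.restrict (annulus n k))
    refine this.trans (le_of_eq ?_)
    rw [Real.enorm_of_nonneg (by positivity)]
  refine e1.trans ?_
  calc _ ≤ ENNReal.ofReal (2 ^ |γ| * ((2 : ℝ) ^ (k : ℝ)) ^ γ * α) *
        ((ENNReal.ofReal (((2:ℝ)^(k:ℝ))^(-s)) * ENNReal.ofReal M) ^ (α - 1) * (ENNReal.ofReal (((2:ℝ)^(k:ℝ))^(-s)) * B)) := by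
        refine mul_le_mul_right (hH.trans ?_) _
        gcongr
    _ = _ := by
        rw [← ENNReal.ofReal_mul (by positivity), ENNReal.ofReal_rpow_of_pos (by positivity), ← mul_assoc, ← mul_assoc,
          ← mul_assoc, ← ENNReal.ofReal_mul (by positivity), ← ENNReal.ofReal_mul (by positivity), ← ENNReal.ofReal_mul (by positivity)]
        congr 2
        rw [Real.mul_rpow (by positivity) hM.le, ← Real.rpow_mul hK.le,
          show -(α * s - γ) = γ + (-s * (α - 1) + -s) by ring, Real.rpow_add hK, Real.rpow_add hK]
        ring

def Hf (n : ℕ) (γ α : ℝ) (u₁ u₂ : ℝ → Euc n → ℝ) (τ : ℝ) (y : Euc n) : ℝ≥0∞ :=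
  ENNReal.ofReal (‖y‖ ^ γ * (α * ((|u₁ τ y| + |u₂ τ y|) ^ (α - 1) * |u₁ τ y - u₂ τ y|)))

theorem Hf_measurable (n : ℕ) (γ α : ℝ) (u₁ u₂ : ℝ → Euc n → ℝ) (h₁ : Measurable (Function.uncurry u₁))
    (h₂ : Measurable (Function.uncurry u₂)) : Measurable (Function.uncurry (Hf n γ α u₁ u₂)) := by
  have e1 : Measurable fun z : ℝ × Euc n => u₁ z.1 z.2 := h₁
  have e2 : Measurable fun z : ℝ × Euc n => u₂ z.1 z.2 := h₂
  unfold Hf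
  apply Measurable.ennreal_ofReal
  apply Measurable.mul
  · exact (measurable_snd.norm).pow_const _
  · apply Measurable.mul measurable_const
    apply Measurable.mul
    · exact (e1.abs.add e2.abs).pow_const _
    · exact (e1.sub e2).abs

theorem diff_bound (n : ℕ) (γ α T : ℝ) (hα : 1 < α) (u₀ : Euc n → ℝ) (u₁ u₂ : ℝ → Euc n → ℝ)
    (h₁ : IsMildSolution n γ α T u₀ u₁) (h₂ : IsMildSolution n γ α T u₀ u₂) :
    ∀ᵐ p : ℝ × Euc n ∂((volume.restrict (Set.Ioo (0 : ℝ) T)).prod volume),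
      ‖u₁ p.1 p.2 - u₂ p.1 p.2‖ₑ ≤
        ∫⁻ τ in Ioo 0 p.1, ∫⁻ y, gE n (p.1 - τ) p.2 y * Hf n γ α u₁ u₂ τ y := by
  have hH := Hf_measurable n γ α u₁ u₂ h₁.1 h₂.1
  have hH' : Measurable fun z : ℝ × Euc n => Hf n γ α u₁ u₂ z.1 z.2 := hH
  filter_upwards [h₁.2, h₂.2] with p hp1 hp2
  obtain ⟨-, i1, e1⟩ := hp1
  obtain ⟨-, i2, e2⟩ := hp2
  rw [e1, e2, add_sub_add_left_eq_sub, ← integral_sub i1 i2]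
  refine (enorm_integral_le_lintegral_enorm _).trans ?_
  have hm : Measurable fun z : ℝ × Euc n => gE n (p.1 - z.1) p.2 z.2 * Hf n γ α u₁ u₂ z.1 z.2 := by
    fun_prop
  rw [← lintegral_prod (f := fun z : ℝ × Euc n => gE n (p.1 - z.1) p.2 z.2 * Hf n γ α u₁ u₂ z.1 z.2) hm.aemeasurable]
  apply lintegral_mono_ae
  have hae : ∀ᵐ z ∂((volume.restrict (Ioo 0 p.1)).prod (volume : Measure (Euc n))), z.1 ∈ Ioo 0 p.1 :=
    Measure.quasiMeasurePreserving_fst.ae (ae_restrict_mem measurableSet_Ioo)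
  filter_upwards [hae] with z hz
  have hk := heatKernel_nonneg' n (t := p.1 - z.1) (by linarith [hz.2]) p.2 z.2
  rw [← mul_sub, enorm_mul, Real.enorm_of_nonneg hk]
  unfold gE
  gcongr
  unfold Hf nonlin
  rw [mul_assoc, mul_assoc, ← mul_sub, enorm_mul, Real.enorm_of_nonneg (by positivity), ENNReal.ofReal_mul (by positivity)]
  gcongr
  rw [← ofReal_norm_eq_enorm]
  exact ENNReal.ofReal_le_ofReal (pow_diff α _ _ hα)

theorem choose_l (K δ : ℝ) (hK : 0 < K) (hδ : δ < 1) :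
    ∃ l : ℝ, 0 < l ∧ K * ((1 / l) ^ (1 - δ) * Real.Gamma (1 - δ)) ≤ 1 / 2 := by
  have hΓ : 0 < Real.Gamma (1 - δ) := Real.Gamma_pos_of_pos (by linarith)
  set G := Real.Gamma (1 - δ)
  have hp : 0 < 2 * K * G + 1 := by positivity
  refine ⟨(2 * K * G + 1) ^ (1 / (1 - δ)), by positivity, ?_⟩
  rw [Real.div_rpow (by norm_num) (by positivity), Real.one_rpow, ← Real.rpow_mul hp.le,
    one_div_mul_cancel (by linarith), Real.rpow_one]
  rw [show K * (1 / (2 * K * G + 1) * G) = (K * G) / (2 * K * G + 1) by ring, div_le_div_iff₀ hp (by norm_num)]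
  linarith

set_option maxHeartbeats 1000000 in
theorem step (n : ℕ) (hn : 1 ≤ n) (γ α s T : ℝ) (q : ℝ≥0∞) (hα : 1 < α)
    (hq : ENNReal.ofReal α ≤ q) (hs1 : γ ≤ (α - 1) * s)
    (a b δ : ℝ) (ha : a = s + n * (q⁻¹).toReal) (ha0 : 0 ≤ a) (hb : b = n + γ - α * a) (hb0 : 0 < b)
    (hδ : δ = (n - a - b) / 2) (hδ1 : δ < 1)
    (u₁ u₂ : ℝ → Euc n → ℝ) (h₁ : Measurable (Function.uncurry u₁)) (h₂ : Measurable (Function.uncurry u₂))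
    (M : ℝ) (hM : 0 < M)
    (hV : ∀ᵐ t ∂(volume.restrict (Ioo (0 : ℝ) T)), ∀ j : ℤ,
      eLpNorm (fun x => |u₁ t x| + |u₂ t x|) q (volume.restrict (annulus n j)) ≤
        ENNReal.ofReal (((2:ℝ)^(j:ℝ))^(-s)) * ENNReal.ofReal M)
    (hd : ∀ᵐ t ∂(volume.restrict (Ioo (0 : ℝ) T)), ∀ᵐ x, ‖u₁ t x - u₂ t x‖ₑ ≤
        ∫⁻ τ in Ioo 0 t, ∫⁻ y, gE n (t - τ) x y * Hf n γ α u₁ u₂ τ y) :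
    ∃ l : ℝ, 0 < l ∧ ∀ N : ℝ, 0 < N →
      (∀ᵐ t ∂(volume.restrict (Ioo (0 : ℝ) T)), ∀ j : ℤ,
        eLpNorm (fun x => u₁ t x - u₂ t x) q (volume.restrict (annulus n j)) ≤
          ENNReal.ofReal (((2:ℝ)^(j:ℝ))^(-s)) * ENNReal.ofReal (N * Real.exp (l * t))) →
      (∀ᵐ t ∂(volume.restrict (Ioo (0 : ℝ) T)), ∀ j : ℤ,
        eLpNorm (fun x => u₁ t x - u₂ t x) q (volume.restrict (annulus n j)) ≤
          ENNReal.ofReal (((2:ℝ)^(j:ℝ))^(-s)) * ENNReal.ofReal (N / 2 * Real.exp (l * t))) := by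
  obtain ⟨p1, p2, p3, p4⟩ := p_facts α hα q hq
  obtain ⟨C, hC, hsm⟩ := smoothing n hn s (α * s - γ) (q / ENNReal.ofReal α) q p1 p2 p3 a b ha ha0
    (by rw [p4, hb, ha]; ring) hb0 (by linarith)
  have hα0 : 0 < α := by linarith
  obtain ⟨D, hD⟩ : ∃ D : ℝ, D = 2 ^ |γ| * α * M ^ (α - 1) := ⟨_, rfl⟩
  have hDp : 0 < D := by rw [hD]; positivity
  obtain ⟨l, hl, hl2⟩ := choose_l (C * D) δ (by positivity) hδ1
  refine ⟨l, hl, fun N hN hw => ?_⟩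
  have hH := Hf_measurable n γ α u₁ u₂ h₁ h₂
  have hH' : Measurable fun z : ℝ × Euc n => Hf n γ α u₁ u₂ z.1 z.2 := hH
  have m1 : Measurable fun z : ℝ × Euc n => u₁ z.1 z.2 := h₁
  have m2 : Measurable fun z : ℝ × Euc n => u₂ z.1 z.2 := h₂
  -- bound of the smoothed nonlinearity
  have key : ∀ᵐ τ ∂(volume.restrict (Ioo (0 : ℝ) T)), ∀ t, τ < t → ∀ j : ℤ,
      eLpNorm (fun x => ∫⁻ y, gE n (t - τ) x y * Hf n γ α u₁ u₂ τ y) q (volume.restrict (annulus n j)) ≤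
        ENNReal.ofReal (C * ((t - τ) ^ (-δ) * ((2:ℝ)^(j:ℝ))^(-s))) * (ENNReal.ofReal D * ENNReal.ofReal (N * Real.exp (l * τ))) := by
    filter_upwards [hV, hw] with τ hVτ hwτ t ht j
    have n1 : Measurable (u₁ τ) := m1.comp measurable_prodMk_left
    have n2 : Measurable (u₂ τ) := m2.comp measurable_prodMk_left
    have np : ∀ k : ℤ, eLpNorm (Hf n γ α u₁ u₂ τ) (q / ENNReal.ofReal α) (volume.restrict (annulus n k)) ≤
        ENNReal.ofReal (((2:ℝ)^(k:ℝ))^(-(α * s - γ))) *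
          (ENNReal.ofReal D * ENNReal.ofReal (N * Real.exp (l * τ))) := by
      intro k
      rw [hD]
      exact nonlin_piece n γ α s hα q hq (fun x => |u₁ τ x| + |u₂ τ x|) (fun x => u₁ τ x - u₂ τ x)
        (n1.abs.add n2.abs) (n1.sub n2) (fun x => add_nonneg (abs_nonneg _) (abs_nonneg _)) M hM _ k (hVτ k) (hwτ k)
    have hB0 : ENNReal.ofReal D * ENNReal.ofReal (N * Real.exp (l * τ)) ≠ 0 := by
      rw [← ENNReal.ofReal_mul hDp.le, ne_eq, ENNReal.ofReal_eq_zero, not_le]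
      positivity
    have hBt : ENNReal.ofReal D * ENNReal.ofReal (N * Real.exp (l * τ)) ≠ ⊤ :=
      ENNReal.mul_ne_top ENNReal.ofReal_ne_top ENNReal.ofReal_ne_top
    have hHm : Measurable (Hf n γ α u₁ u₂ τ) := hH.of_uncurry_left
    have := hsm (t - τ) (Hf n γ α u₁ u₂ τ) _ (by linarith) hHm hB0 hBt np j
    rw [← hδ] at this
    exact this
  filter_upwards [hd, ae_restrict_mem measurableSet_Ioo] with t hdt ht j
  have key' : ∀ᵐ τ ∂(volume.restrict (Ioo (0 : ℝ) t)),
      eLpNorm (fun x => ∫⁻ y, gE n (t - τ) x y * Hf n γ α u₁ u₂ τ y) q (volume.restrict (annulus n j)) ≤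
        ENNReal.ofReal (C * ((t - τ) ^ (-δ) * ((2:ℝ)^(j:ℝ))^(-s))) * (ENNReal.ofReal D * ENNReal.ofReal (N * Real.exp (l * τ))) := by
    have := ae_mono (Measure.restrict_mono (show Ioo (0:ℝ) t ⊆ Ioo (0:ℝ) T from fun z hz => ⟨hz.1, hz.2.trans ht.2⟩) le_rfl) key
    filter_upwards [this, ae_restrict_mem measurableSet_Ioo] with τ hτ hτ2
    exact hτ t hτ2.2 j
  have hJ : (0 : ℝ) < ((2:ℝ)^(j:ℝ))^(-s) := by positivity
  set J := ((2:ℝ)^(j:ℝ))^(-s)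
  have s1 : eLpNorm (fun x => u₁ t x - u₂ t x) q (volume.restrict (annulus n j)) ≤
      eLpNorm (fun x => ∫⁻ τ in Ioo 0 t, ∫⁻ y, gE n (t - τ) x y * Hf n γ α u₁ u₂ τ y) q
        (volume.restrict (annulus n j)) := by
    apply eLpNorm_mono_enorm_ae
    filter_upwards [ae_restrict_of_ae hdt] with x hx
    rwa [enorm_eq_self]
  refine s1.trans ?_
  refine (minkowski_bound (volume.restrict (annulus n j)) (volume.restrict (Ioo 0 t)) q (p1.trans p2)
    (fun τ x => ∫⁻ y, gE n (t - τ) x y * Hf n γ α u₁ u₂ τ y) ?_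
    (fun τ => ENNReal.ofReal (C * ((t - τ) ^ (-δ) * J)) * (ENNReal.ofReal D * ENNReal.ofReal (N * Real.exp (l * τ))))
    (by fun_prop) ?_ ?_ key').trans ?_
  · have : Measurable fun z : (ℝ × Euc n) × Euc n => gE n (t - z.1.1) z.1.2 z.2 * Hf n γ α u₁ u₂ z.1.1 z.2 := by
      have g1 : Measurable fun z : (ℝ × Euc n) × Euc n => gE n (t - z.1.1) z.1.2 z.2 := by fun_prop
      have g2 : Measurable fun z : (ℝ × Euc n) × Euc n => Hf n γ α u₁ u₂ z.1.1 z.2 :=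
        Measurable.comp (g := Function.uncurry (Hf n γ α u₁ u₂)) (f := fun z : (ℝ × Euc n) × Euc n => (z.1.1, z.2))
          hH ((measurable_fst.comp measurable_fst).prodMk measurable_snd)
      exact g1.mul g2
    exact this.lintegral_prod_right'
  · filter_upwards [ae_restrict_mem measurableSet_Ioo] with τ hτ
    have h3 : 0 < t - τ := by linarith [hτ.2]
    have : 0 < (t - τ) ^ (-δ) := Real.rpow_pos_of_pos h3 _
    rw [← ENNReal.ofReal_mul hDp.le, ← ENNReal.ofReal_mul (by positivity), ne_eq, ENNReal.ofReal_eq_zero, not_le]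
    positivity
  · exact Eventually.of_forall fun τ => by finiteness
  · calc _ = ∫⁻ τ in Ioo 0 t, ENNReal.ofReal (C * J * D * N) * ENNReal.ofReal ((t - τ) ^ (-δ) * Real.exp (l * τ)) := by
          apply setLIntegral_congr_fun measurableSet_Ioo
          intro τ hτ
          have h3 : 0 < t - τ := by linarith [hτ.2]
          have : 0 < (t - τ) ^ (-δ) := Real.rpow_pos_of_pos h3 _
          simp only
          rw [← ENNReal.ofReal_mul hDp.le, ← ENNReal.ofReal_mul (by positivity), ← ENNReal.ofReal_mul (by positivity)]
          congr 1; ring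
      _ = ENNReal.ofReal (C * J * D * N) * ∫⁻ τ in Ioo 0 t, ENNReal.ofReal ((t - τ) ^ (-δ) * Real.exp (l * τ)) := by
          rw [lintegral_const_mul' _ _ ENNReal.ofReal_ne_top]
      _ ≤ ENNReal.ofReal (C * J * D * N) * ENNReal.ofReal (Real.exp (l*t) * ((1/l)^(1-δ) * Real.Gamma (1-δ))) := by
          gcongr
          exact time_integral δ l t hδ1 hl
      _ ≤ _ := by
          rw [← ENNReal.ofReal_mul (by positivity), ← ENNReal.ofReal_mul (by positivity)]
          apply ENNReal.ofReal_le_ofReal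
          calc _ = (J * N * Real.exp (l * t)) * (C * D * ((1/l)^(1-δ) * Real.Gamma (1-δ))) := by ring
            _ ≤ (J * N * Real.exp (l * t)) * (1 / 2) := by gcongr
            _ = _ := by ring

theorem main_thm
    (n : ℕ) (hn : 1 ≤ n) (γ α s T : ℝ) (q r : ℝ≥0∞)
    (hα : 1 < α)
    (hs1 : γ / (α - 1) ≤ s)
    (hq : ENNReal.ofReal α ≤ q) (hr : 0 < r)
    (hwd1 : 0 ≤ s / (n : ℝ) + (q⁻¹).toReal)
    (hsub : s / (n : ℝ) + (q⁻¹).toReal <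
      min ((2 + γ) / ((n : ℝ) * (α - 1))) (((n : ℝ) + γ) / ((n : ℝ) * α)))
    (u₀ : Euc n → ℝ)
    (u₁ u₂ : ℝ → Euc n → ℝ)
    (h₁ : IsMildSolution n γ α T u₀ u₁) (h₂ : IsMildSolution n γ α T u₀ u₂)
    (hb₁ : essSup (fun t => herzNorm n s q r (u₁ t)) (volume.restrict (Set.Ioo (0 : ℝ) T)) < ⊤)
    (hb₂ : essSup (fun t => herzNorm n s q r (u₂ t)) (volume.restrict (Set.Ioo (0 : ℝ) T)) < ⊤) :
    ∀ᵐ p : ℝ × Euc n ∂((volume.restrict (Set.Ioo (0 : ℝ) T)).prod volume),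
      u₁ p.1 p.2 = u₂ p.1 p.2 := by
  have hn0 : (0 : ℝ) < n := by exact_mod_cast hn
  have hα1 : 0 < α - 1 := by linarith
  have hα0 : 0 < α := by linarith
  have hq1 : 1 ≤ q := (p_facts α hα q hq).1.trans (p_facts α hα q hq).2.1
  set σ := s / (n : ℝ) + (q⁻¹).toReal with hσ
  have ha : n * σ = s + n * (q⁻¹).toReal := by rw [hσ]; field_simp
  obtain ⟨hsub1, hsub2⟩ := lt_min_iff.1 hsub
  rw [lt_div_iff₀ (by positivity)] at hsub1 hsub2
  rw [div_le_iff₀ hα1] at hs1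
  have m1 : Measurable fun z : ℝ × Euc n => u₁ z.1 z.2 := h₁.1
  have m2 : Measurable fun z : ℝ × Euc n => u₂ z.1 z.2 := h₂.1
  set M₁ := essSup (fun t => herzNorm n s q r (u₁ t)) (volume.restrict (Set.Ioo (0 : ℝ) T))
  set M₂ := essSup (fun t => herzNorm n s q r (u₂ t)) (volume.restrict (Set.Ioo (0 : ℝ) T))
  set M : ℝ := M₁.toReal + M₂.toReal + 1 with hMdef
  have hM : 0 < M := by positivity
  have hMle : M₁ + M₂ ≤ ENNReal.ofReal M := by
    rw [hMdef, ENNReal.ofReal_add (by positivity) (by norm_num), ENNReal.ofReal_add (by positivity) (by positivity),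
      ENNReal.ofReal_toReal hb₁.ne, ENNReal.ofReal_toReal hb₂.ne]
    exact le_self_add
  have hV : ∀ᵐ t ∂(volume.restrict (Ioo (0 : ℝ) T)), ∀ j : ℤ,
      eLpNorm (fun x => |u₁ t x| + |u₂ t x|) q (volume.restrict (annulus n j)) ≤
        ENNReal.ofReal (((2:ℝ)^(j:ℝ))^(-s)) * ENNReal.ofReal M := by
    filter_upwards [ENNReal.ae_le_essSup (μ := volume.restrict (Ioo (0 : ℝ) T)) (fun t => herzNorm n s q r (u₁ t)),
      ENNReal.ae_le_essSup (μ := volume.restrict (Ioo (0 : ℝ) T)) (fun t => herzNorm n s q r (u₂ t))] with t ht1 ht2 j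
    have n1 : Measurable (u₁ t) := m1.comp measurable_prodMk_left
    have n2 : Measurable (u₂ t) := m2.comp measurable_prodMk_left
    have b1 := herz_bound n s q r hr (u₁ t) M₁ ht1 j
    have b2 := herz_bound n s q r hr (u₂ t) M₂ ht2 j
    have := eLpNorm_add_le (μ := volume.restrict (annulus n j)) (f := fun x => |u₁ t x|) (g := fun x => |u₂ t x|) (p := q)
      n1.abs.aestronglyMeasurable n2.abs.aestronglyMeasurable hq1
    have e1 : eLpNorm (fun x => |u₁ t x|) q (volume.restrict (annulus n j)) = eLpNorm (u₁ t) q (volume.restrict (annulus n j)) :=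
      eLpNorm_norm (u₁ t)
    have e2 : eLpNorm (fun x => |u₂ t x|) q (volume.restrict (annulus n j)) = eLpNorm (u₂ t) q (volume.restrict (annulus n j)) :=
      eLpNorm_norm (u₂ t)
    rw [e1, e2] at this
    refine this.trans ((add_le_add b1 b2).trans ?_)
    rw [← mul_add]
    gcongr
  have hd := Measure.ae_ae_of_ae_prod (diff_bound n γ α T hα u₀ u₁ u₂ h₁ h₂)
  obtain ⟨l, hl, hstep⟩ := step n hn γ α s T q hα hq (by linarith) (n * σ) (n + γ - α * (n * σ))
    ((n - n * σ - (n + γ - α * (n * σ))) / 2) ha (by positivity) rfl (by nlinarith) rfl (by nlinarith)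
    u₁ u₂ h₁.1 h₂.1 M hM hV hd
  have hall : ∀ m : ℕ, ∀ᵐ t ∂(volume.restrict (Ioo (0 : ℝ) T)), ∀ j : ℤ,
        eLpNorm (fun x => u₁ t x - u₂ t x) q (volume.restrict (annulus n j)) ≤
          ENNReal.ofReal (((2:ℝ)^(j:ℝ))^(-s)) * ENNReal.ofReal (M * (1 / 2) ^ m * Real.exp (l * t)) := by
    intro m
    induction m with
    | zero =>
      filter_upwards [hV, ae_restrict_mem measurableSet_Ioo] with t ht htm j
      refine (eLpNorm_mono fun x => ?_).trans ((ht j).trans ?_)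
      · simp only [Real.norm_eq_abs]
        rw [abs_of_nonneg (a := |u₁ t x| + |u₂ t x|) (by positivity)]
        exact abs_sub _ _
      · gcongr
        rw [pow_zero, mul_one]
        have : 1 ≤ Real.exp (l * t) := Real.one_le_exp (mul_nonneg hl.le htm.1.le)
        nlinarith
    | succ m ih =>
      have := hstep (M * (1 / 2) ^ m) (by positivity) ih
      filter_upwards [this] with t ht j
      refine (ht j).trans (le_of_eq ?_)
      congr 3
      rw [pow_succ]; ring
  have hzero : ∀ᵐ t ∂(volume.restrict (Ioo (0 : ℝ) T)), ∀ᵐ x, u₁ t x = u₂ t x := by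
    filter_upwards [ae_all_iff.2 hall] with t ht
    have n1 : Measurable (u₁ t) := m1.comp measurable_prodMk_left
    have n2 : Measurable (u₂ t) := m2.comp measurable_prodMk_left
    have hz : ∀ j : ℤ, eLpNorm (fun x => u₁ t x - u₂ t x) q (volume.restrict (annulus n j)) = 0 := by
      intro j
      have hlim : Tendsto (fun m : ℕ => ENNReal.ofReal (((2:ℝ)^(j:ℝ))^(-s)) * ENNReal.ofReal (M * (1 / 2) ^ m * Real.exp (l * t)))
          atTop (nhds (ENNReal.ofReal (((2:ℝ)^(j:ℝ))^(-s)) * ENNReal.ofReal (M * 0 * Real.exp (l * t)))) := by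
        apply ENNReal.Tendsto.const_mul _ (Or.inr ENNReal.ofReal_ne_top)
        apply ENNReal.tendsto_ofReal
        exact ((_root_.tendsto_pow_atTop_nhds_zero_of_lt_one (r := (1 / 2 : ℝ)) (by norm_num) (by norm_num)).const_mul M).mul_const _
      have := ge_of_tendsto' hlim (fun m => ht m j)
      simpa using this
    rw [← iUnion_annulus_ae n hn]
    rw [ae_restrict_iUnion_iff]
    intro j
    have := (eLpNorm_eq_zero_iff (n1.sub n2).aestronglyMeasurable (by positivity)).1 (hz j)
    filter_upwards [this] with x hx
    exact sub_eq_zero.1 hx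
  rw [Measure.ae_prod_iff_ae_ae]
  · exact hzero
  · exact measurableSet_eq_fun m1 m2

/-- Unconditional uniqueness for the Hardy–Hénon equation in the double subcritical case
`s/n + 1/q < min(1/q_c, 1/Q_c)`, where `1/q_c = (2+γ)/(n(α-1))` and `1/Q_c = (n+γ)/(nα)`. -/
theorem uniqueness_double_subcritical
    (n : ℕ) (hn : 1 ≤ n) (γ α s T : ℝ) (q r : ℝ≥0∞)
    (hγ : -(min 2 (n : ℝ)) < γ) (hα : 1 < α)
    (hα' : max 1 (1 + γ / (n : ℝ)) ≤ α)
    (hs1 : γ / (α - 1) ≤ s) (hs2 : s ≤ (n : ℝ))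
    (hq : ENNReal.ofReal α ≤ q) (hr : 0 < r)
    (hwd1 : 0 < s / (n : ℝ) + (q⁻¹).toReal ∨
      (s / (n : ℝ) + (q⁻¹).toReal = 0 ∧ r = ⊤))
    (hwd2 : s / (n : ℝ) + (q⁻¹).toReal < 1 ∨
      (s / (n : ℝ) + (q⁻¹).toReal = 1 ∧ r ≤ 1))
    (hsub : s / (n : ℝ) + (q⁻¹).toReal <
      min ((2 + γ) / ((n : ℝ) * (α - 1))) (((n : ℝ) + γ) / ((n : ℝ) * α)))
    (hT : 0 < T) (u₀ : Euc n → ℝ) (hu₀ : Measurable u₀)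
    (u₁ u₂ : ℝ → Euc n → ℝ)
    (h₁ : IsMildSolution n γ α T u₀ u₁) (h₂ : IsMildSolution n γ α T u₀ u₂)
    (hb₁ : essSup (fun t => herzNorm n s q r (u₁ t)) (volume.restrict (Set.Ioo (0 : ℝ) T)) < ⊤)
    (hb₂ : essSup (fun t => herzNorm n s q r (u₂ t)) (volume.restrict (Set.Ioo (0 : ℝ) T)) < ⊤) :
    ∀ᵐ p : ℝ × Euc n ∂((volume.restrict (Set.Ioo (0 : ℝ) T)).prod volume),
      u₁ p.1 p.2 = u₂ p.1 p.2 := by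
  exact main_thm n hn γ α s T q r hα hs1 hq hr
    (by rcases hwd1 with h | h; exacts [h.le, h.1.ge]) hsub u₀ u₁ u₂ h₁ h₂ hb₁ hb₂
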